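/- arXiv:2108.09767 — 7 statements merged into one kernel-verified Lean document; each statement's English description precedes it below -/
import Mathlib

section
/- Under the Frank–Wolfe setup, suppose in addition that every step size satisfies |L·D²·η_t − ∇f(x_{t−1})ᵀ(z_t − x_{t−1})| ≤ ε for some ε ≥ 0, and let x̄ = x_{t′−1} where t′ ∈ argmin_{1≤t≤T} η_t. Then max_{u∈K₂} ∇f(x̄)ᵀ(u − x̄) ≤ √(2·H·L·D²/T) + 3ε + ε₀. -/
open scoped RealInnerProductSpace

/-!
Write `g_t` for the slope `f'(x_t) (z_t - x_t)` of the step taken at `x_t`. As `g_t` is within `ε`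
of `C η_t`, a curvature bound `C` for `f` gives the ascent inequality
`f(x_{t+1}) - f(x_t) ≥ η_t g_t - C η_t² / 2 ≥ η_t (C η_t - 2ε) / 2`.
Let `a = C · min η`. If `a > 2ε`, the right-hand side is smallest at the minimal step, so summing
over `t` bounds the total ascent below by `T a (a - 2ε) / (2C)`. The total ascent is at most `H`,
hence `(a - 2ε)² ≤ a (a - 2ε) ≤ 2HC/T`. In all cases `a ≤ √(2HC/T) + 2ε`, so at the minimal step
the slope is at most `√(2HC/T) + 3ε`, and the oracle guarantee costs a further `ε₀`. Smoothness
`L` on a set of diameter `D` yields the curvature bound `C = L D²`.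
-/

section

variable {E : Type*} [AddCommGroup E] [Module ℝ E] {K K₂ : Set E} {f : E → ℝ}
  {f' : E → Module.Dual ℝ E}

/-- `C` bounds the curvature constant of `f` on `K`, in Jaggi's sense for maximization: along a
segment of `K`, `f` falls below its linear model with slope `f' x` by at most `C γ² / 2`. Only this
inequality ties `f'` to `f`, so no topology on `E` is needed; for differentiable `f`, take `f'` to
be the derivative. -/
def CurvatureBoundOn (f : E → ℝ) (f' : E → Module.Dual ℝ E) (K : Set E) (C : ℝ) : Prop :=
  ∀ ⦃x⦄, x ∈ K → ∀ ⦃z⦄, z ∈ K → ∀ ⦃γ : ℝ⦄, γ ∈ Set.Icc 0 1 →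
    f x + γ * f' x (z - x) - C / 2 * γ ^ 2 ≤ f ((1 - γ) • x + γ • z)

theorem CurvatureBoundOn.of_quadratic_lower_bound {p : Seminorm ℝ E} {D L : ℝ}
    (hK : Convex ℝ K) (hL : 0 ≤ L) (hdiam : ∀ x ∈ K, ∀ y ∈ K, p (x - y) ≤ D)
    (hf : ∀ x ∈ K, ∀ y ∈ K, f x + f' x (y - x) - L / 2 * p (x - y) ^ 2 ≤ f y) :
    CurvatureBoundOn f f' K (L * D ^ 2) := by
  intro x hx z hz γ hγ
  have hp : p (γ • (x - z)) ≤ γ * D := by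
    rw [map_smul_eq_mul, Real.norm_of_nonneg hγ.1]
    exact mul_le_mul_of_nonneg_left (hdiam x hx z hz) hγ.1
  have hforward : (1 - γ) • x + γ • z - x = γ • (z - x) := by module
  have hbackward : x - ((1 - γ) • x + γ • z) = γ • (x - z) := by module
  calc f x + γ * f' x (z - x) - L * D ^ 2 / 2 * γ ^ 2
      = f x + f' x (γ • (z - x)) - L / 2 * (γ * D) ^ 2 := by
        rw [map_smul, smul_eq_mul]; ring
    _ ≤ f x + f' x (γ • (z - x)) - L / 2 * p (γ • (x - z)) ^ 2 := by gcongr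
    _ ≤ f ((1 - γ) • x + γ • z) := by
        rw [← hforward, ← hbackward]
        exact hf x hx _ (hK hx hz (sub_nonneg.2 hγ.2) hγ.1 (sub_add_cancel 1 γ))

theorem CurvatureBoundOn.le_ascent {C ε γ : ℝ} {x z : E} (hf : CurvatureBoundOn f f' K C)
    (hx : x ∈ K) (hz : z ∈ K) (hγ : γ ∈ Set.Icc 0 1) (hslope : C * γ - ε ≤ f' x (z - x)) :
    γ * (C * γ - 2 * ε) / 2 ≤ f ((1 - γ) • x + γ • z) - f x := by
  have hmul := mul_le_mul_of_nonneg_left hslope hγ.1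
  linarith [hf hx hz hγ]

/-- `T` steps of the Frank–Wolfe method on `K` for maximization, where `z t` maximizes `f' (x t)`
over `K₂` up to `ε₀`. Steps are numbered from `0`: `z t` and `η t` lead from `x t` to
`x (t + 1)`. -/
structure IsFrankWolfeRun (f' : E → Module.Dual ℝ E) (K K₂ : Set E) (ε₀ : ℝ) (T : ℕ)
    (η : ℕ → ℝ) (x z : ℕ → E) : Prop where
  init_mem : x 0 ∈ K
  vertex_mem : ∀ t < T, z t ∈ K
  stepSize_mem : ∀ t < T, η t ∈ Set.Icc 0 1
  oracle_le : ∀ t < T, ∀ u ∈ K₂, f' (x t) u - ε₀ ≤ f' (x t) (z t)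
  succ_eq : ∀ t < T, x (t + 1) = (1 - η t) • x t + η t • z t

namespace IsFrankWolfeRun

variable {C H ε ε₀ m : ℝ} {T : ℕ} {η : ℕ → ℝ} {x z : ℕ → E}

theorem iterate_mem (hrun : IsFrankWolfeRun f' K K₂ ε₀ T η x z) (hK : Convex ℝ K) :
    ∀ t ≤ T, x t ∈ K
  | 0, _ => hrun.init_mem
  | t + 1, ht => by
    have hη := hrun.stepSize_mem t ht
    rw [hrun.succ_eq t ht]
    exact hK (hrun.iterate_mem hK t (Nat.le_of_lt ht)) (hrun.vertex_mem t ht)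
      (sub_nonneg.2 hη.2) hη.1 (sub_add_cancel 1 (η t))

theorem le_ascent (hrun : IsFrankWolfeRun f' K K₂ ε₀ T η x z) (hK : Convex ℝ K)
    (hf : CurvatureBoundOn f f' K C) {t : ℕ} (ht : t < T)
    (hslope : C * η t - ε ≤ f' (x t) (z t - x t)) :
    η t * (C * η t - 2 * ε) / 2 ≤ f (x (t + 1)) - f (x t) := by
  rw [hrun.succ_eq t ht]
  exact hf.le_ascent (hrun.iterate_mem hK t ht.le) (hrun.vertex_mem t ht)
    (hrun.stepSize_mem t ht) hslope

theorem le_total_ascent (hrun : IsFrankWolfeRun f' K K₂ ε₀ T η x z) (hK : Convex ℝ K)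
    (hf : CurvatureBoundOn f f' K C) (hslope : ∀ t < T, C * η t - ε ≤ f' (x t) (z t - x t))
    (hC : 0 ≤ C) (hm : 0 ≤ m) (hmC : 2 * ε ≤ C * m) (hmin : ∀ t < T, m ≤ η t) :
    T * (m * (C * m - 2 * ε) / 2) ≤ f (x T) - f (x 0) := by
  have hstep : ∀ t ∈ Finset.range T,
      m * (C * m - 2 * ε) / 2 ≤ f (x (t + 1)) - f (x t) := by
    intro t ht
    rw [Finset.mem_range] at ht
    have hmη := hmin t ht
    calc m * (C * m - 2 * ε) / 2 ≤ η t * (C * η t - 2 * ε) / 2 := by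
          gcongr
          exact hm.trans hmη
      _ ≤ f (x (t + 1)) - f (x t) := hrun.le_ascent hK hf ht (hslope t ht)
  simpa only [Finset.card_range, nsmul_eq_mul, Finset.sum_range_sub (fun t ↦ f (x t))] using
    Finset.card_nsmul_le_sum _ _ _ hstep

theorem mul_stepSize_le_sqrt_add (hrun : IsFrankWolfeRun f' K K₂ ε₀ T η x z) (hK : Convex ℝ K)
    (hf : CurvatureBoundOn f f' K C) (hslope : ∀ t < T, C * η t - ε ≤ f' (x t) (z t - x t))
    (hH : f (x T) - f (x 0) ≤ H) (hT : 0 < T) (hε : 0 ≤ ε) (hm : 0 ≤ m)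
    (hmin : ∀ t < T, m ≤ η t) :
    C * m ≤ √(2 * H * C / T) + 2 * ε := by
  rcases le_or_gt (C * m) (2 * ε) with hle | hgt
  · linarith [Real.sqrt_nonneg (2 * H * C / T)]
  have hC : 0 ≤ C := (pos_of_mul_pos_left (by linarith) hm).le
  have hascent := (hrun.le_total_ascent hK hf hslope hC hm hgt.le hmin).trans hH
  have hsq : (C * m - 2 * ε) ^ 2 ≤ 2 * H * C / T := by
    rw [le_div_iff₀ (Nat.cast_pos.2 hT)]
    calc (C * m - 2 * ε) ^ 2 * T ≤ C * m * (C * m - 2 * ε) * T := by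
          rw [sq]
          gcongr
          all_goals linarith
      _ = 2 * C * (T * (m * (C * m - 2 * ε) / 2)) := by ring
      _ ≤ 2 * C * H := by gcongr
      _ = 2 * H * C := by ring
  linarith [Real.le_sqrt_of_sq_le hsq]

end IsFrankWolfeRun

theorem frank_wolfe_nonconvex_general {C H ε ε₀ : ℝ} {T : ℕ} {η : ℕ → ℝ} {x z : ℕ → E}
    (hK : Convex ℝ K) (hf : CurvatureBoundOn f f' K C) (hH : ∀ x ∈ K, ∀ y ∈ K, f y - f x ≤ H)
    (hrun : IsFrankWolfeRun f' K K₂ ε₀ T η x z)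
    (hstep : ∀ t < T, |C * η t - f' (x t) (z t - x t)| ≤ ε)
    {s : ℕ} (hs : s < T) (hmin : ∀ t < T, η s ≤ η t) :
    ∀ u ∈ K₂, f' (x s) (u - x s) ≤ √(2 * H * C / T) + 3 * ε + ε₀ := by
  intro u hu
  have hη : C * η s ≤ √(2 * H * C / T) + 2 * ε :=
    hrun.mul_stepSize_le_sqrt_add hK hf (fun t ht ↦ sub_le_comm.1 (abs_le.1 (hstep t ht)).2)
      (hH _ hrun.init_mem _ (hrun.iterate_mem hK T le_rfl)) (Nat.zero_lt_of_lt hs)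
      ((abs_nonneg _).trans (hstep s hs)) (hrun.stepSize_mem s hs).1 hmin
  have hslope : f' (x s) (z s - x s) ≤ C * η s + ε := by
    linarith [(abs_le.1 (hstep s hs)).1]
  have horacle : f' (x s) (u - x s) ≤ f' (x s) (z s - x s) + ε₀ := by
    rw [map_sub, map_sub]
    linarith [hrun.oracle_le s hs u hu]
  linarith

end

/-- **Frank–Wolfe, non-convex case (Theorem: local optimality of the min-step iterate).**
Under the Frank–Wolfe setup (a compact convex set `K` of `p`-diameter at most `D`, an
`L`-smooth (w.r.t. the seminorm `p`) and `H`-bounded differentiable objective `f`, an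
`(ε₀, K₂)`-approximate linear optimization oracle `O`, and iterates
`z t = O (∇f (x (t-1)))`, `x t = (1 - η t) • x (t-1) + η t • z t`), if moreover every
step size satisfies `|L·D²·η t − ⟪∇f(x (t-1)), z t − x (t-1)⟫| ≤ ε`, and `t'` is the
index of the smallest step size, then for `x̄ = x (t' - 1)`,
`max_{u ∈ K₂} ⟪∇f(x̄), u − x̄⟫ ≤ √(2·H·L·D²/T) + 3ε + ε₀`. -/
theorem frank_wolfe_nonconvex {d : ℕ} (K K₂ : Set (EuclideanSpace ℝ (Fin d)))
    (hKconv : Convex ℝ K) (hKcomp : IsCompact K) (hK₂sub : K₂ ⊆ K) (hK₂ne : K₂.Nonempty)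
    (p : Seminorm ℝ (EuclideanSpace ℝ (Fin d))) (D L H ε₀ ε : ℝ)
    (hD : 0 < D) (hL : 0 < L) (hH : 0 ≤ H) (hε₀ : 0 ≤ ε₀) (hε : 0 ≤ ε)
    (hdiam : ∀ x ∈ K, ∀ y ∈ K, p (x - y) ≤ D)
    (f : EuclideanSpace ℝ (Fin d) → ℝ)
    (hdiff : ∀ x ∈ K, DifferentiableAt ℝ f x)
    (hsmooth : ∀ x ∈ K, ∀ y ∈ K,
      |f y - f x - ⟪gradient f x, y - x⟫| ≤ L / 2 * (p (x - y)) ^ 2)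
    (hbound : ∀ x ∈ K, f x ∈ Set.Icc (0 : ℝ) H)
    (O : EuclideanSpace ℝ (Fin d) → EuclideanSpace ℝ (Fin d))
    (hOmem : ∀ v, O v ∈ K)
    (horacle : ∀ v, ∀ u ∈ K₂, ⟪v, u⟫ - ε₀ ≤ ⟪v, O v⟫)
    (T : ℕ) (hT : 1 ≤ T)
    (η : ℕ → ℝ) (x z : ℕ → EuclideanSpace ℝ (Fin d))
    (hx0 : x 0 ∈ K)
    (hη : ∀ t, 1 ≤ t → t ≤ T → η t ∈ Set.Icc (0 : ℝ) 1)
    (hz : ∀ t, 1 ≤ t → t ≤ T → z t = O (gradient f (x (t - 1))))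
    (hx : ∀ t, 1 ≤ t → t ≤ T → x t = (1 - η t) • x (t - 1) + η t • z t)
    (hstep : ∀ t, 1 ≤ t → t ≤ T →
      |L * D ^ 2 * η t - ⟪gradient f (x (t - 1)), z t - x (t - 1)⟫| ≤ ε)
    (t' : ℕ) (ht'1 : 1 ≤ t') (ht'T : t' ≤ T)
    (ht'min : ∀ t, 1 ≤ t → t ≤ T → η t' ≤ η t) :
    ∀ u ∈ K₂, ⟪gradient f (x (t' - 1)), u - x (t' - 1)⟫ ≤
      Real.sqrt (2 * H * L * D ^ 2 / T) + 3 * ε + ε₀ := by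
  obtain ⟨s, rfl⟩ := Nat.exists_eq_add_of_le' ht'1
  have hcurv : CurvatureBoundOn f (fun y ↦ innerₗ _ (gradient f y)) K (L * D ^ 2) :=
    .of_quadratic_lower_bound hKconv hL.le hdiam fun y hy w hw ↦ by
      linarith [(abs_le.1 (hsmooth y hy w hw)).1, innerₗ_apply_apply (gradient f y) (w - y)]
  have hrun : IsFrankWolfeRun (fun y ↦ innerₗ _ (gradient f y)) K K₂ ε₀ T
      (fun t ↦ η (t + 1)) x (fun t ↦ z (t + 1)) :=
    { init_mem := hx0
      vertex_mem := fun t ht ↦ hz (t + 1) t.succ_pos ht ▸ hOmem _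
      stepSize_mem := fun t ht ↦ hη (t + 1) t.succ_pos ht
      oracle_le := fun t ht u hu ↦ hz (t + 1) t.succ_pos ht ▸ horacle _ u hu
      succ_eq := fun t ht ↦ hx (t + 1) t.succ_pos ht }
  rw [mul_assoc (2 * H)]
  exact frank_wolfe_nonconvex_general hKconv hcurv
    (fun y hy w hw ↦ by linarith [(hbound w hw).2, (hbound y hy).1]) hrun
    (fun t ht ↦ hstep (t + 1) t.succ_pos ht) ht'T (fun t ht ↦ ht'min (t + 1) t.succ_pos ht)
end

section
/- Under the Frank–Wolfe setup, suppose κ ≥ 1, the step sizes are η_t = min{1, 2κ/t}, f is (κ, τ, K₁, K₂)-locally gradient dominated, and all iterates x₀, x₁, …, x_T lie in K₁ ⊆ K. Then max_{x∈K} f(x) − f(x_T) ≤ 2κ²·max{L·D², H}/T + τ + κ·ε₀. -/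
open scoped RealInnerProductSpace

/-!
Let `s t` be the oracle's linear gain at `x t` and `h t = f y - f (x t) - τ - κ ε₀`, with
`C = max (L D²) H`. Gradient domination gives `h t ≤ κ s t`, and smoothness gives
`h (t + 1) ≤ h t - η s t + η² C / 2`, hence `h (t + 1) ≤ (1 - η / κ) h t + η² C / 2`.

Since `τ` may be negative, `h 0 ≤ H` can fail. However, the first step has `η = 1`, so
boundedness of `f` gives `s 0 ≤ 3 C / 2` and `h 0 ≤ 3 κ C / 2`. As long as `t ≤ 2 κ` the step size
is `1`, and the recursion propagates the linear bound `(6 κ - t) C / 4`: this is the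
line through the points of the convex curve `2 κ² C / t` at `t = 2 κ` and `t = 4 κ`, hence below
the curve for `t ≤ 2 κ`. From then on the step size is `2 κ / t` and the bound `2 κ² C / t`
propagates by itself.
-/

namespace FrankWolfe

section Recursion

variable {κ C : ℝ} {T : ℕ} {h s : ℕ → ℝ}

/-- The step size `η_t` of the Frank–Wolfe iteration with gradient domination constant `κ`. Steps
are numbered from `1`; the value at `t = 0` is the junk value `0`. -/
noncomputable def stepSize (κ : ℝ) (t : ℕ) : ℝ := min 1 (2 * κ / t)

lemma stepSize_nonneg (hκ : 0 ≤ κ) (t : ℕ) : 0 ≤ stepSize κ t :=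
  le_min zero_le_one (by positivity)

lemma stepSize_succ_of_le {t : ℕ} (ht : ((t + 1 : ℕ) : ℝ) ≤ 2 * κ) : stepSize κ (t + 1) = 1 :=
  min_eq_left ((one_le_div (by positivity)).2 ht)

lemma stepSize_succ_of_ge {t : ℕ} (ht : 2 * κ ≤ ((t + 1 : ℕ) : ℝ)) :
    stepSize κ (t + 1) = 2 * κ / (t + 1 : ℕ) :=
  min_eq_right ((div_le_one (by positivity)).2 ht)

lemma le_chord_of_contraction (hκ : 1 ≤ κ) (hC : 0 ≤ C) (h_zero : h 0 ≤ 3 / 2 * κ * C) {n : ℕ}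
    (hn : (n : ℝ) ≤ 3 * κ) (hrec : ∀ t < n, h (t + 1) ≤ (1 - 1 / κ) * h t + C / 2) :
    h n ≤ (6 * κ - n) / 4 * C := by
  induction n with
  | zero => push_cast; linarith
  | succ t ih =>
    push_cast at hn ⊢
    have hκ_pos : 0 < κ := by linarith
    have ih : h t ≤ (6 * κ - t) / 4 * C := ih (by linarith) fun i hi => hrec i (by omega)
    have hfactor : 0 ≤ 1 - 1 / κ := sub_nonneg.2 ((div_le_one hκ_pos).2 hκ)
    have hratio : (t : ℝ) / κ ≤ 3 := (div_le_iff₀ hκ_pos).2 (by linarith)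
    calc h (t + 1) ≤ (1 - 1 / κ) * h t + C / 2 := hrec t (by omega)
      _ ≤ (1 - 1 / κ) * ((6 * κ - t) / 4 * C) + C / 2 := by gcongr
      _ = (6 * κ - 4 - t + t / κ) / 4 * C := by field_simp; ring
      _ ≤ (6 * κ - (t + 1)) / 4 * C := by gcongr; linarith

lemma le_div_of_recursion {A : ℝ} (hA : 0 ≤ A) {m n : ℕ} (hm : 1 ≤ m) (hmn : m ≤ n)
    (h_base : h m ≤ A / m)
    (hrec : ∀ t, m ≤ t → t < n →
      h (t + 1) ≤ (1 - 2 / (t + 1 : ℕ)) * h t + A / (t + 1 : ℕ) ^ 2) :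
    h n ≤ A / n := by
  induction n, hmn using Nat.le_induction with
  | base => exact h_base
  | succ t hmt ih =>
    have ih : h t ≤ A / t := ih fun i hi hit => hrec i hi (by omega)
    have ht : (1 : ℝ) ≤ t := by exact_mod_cast hm.trans hmt
    have hstep := hrec t hmt (by omega)
    push_cast at hstep ⊢
    have hfactor : 0 ≤ 1 - 2 / (t + 1 : ℝ) :=
      sub_nonneg.2 ((div_le_one (by linarith)).2 (by linarith))
    calc h (t + 1) ≤ (1 - 2 / (t + 1 : ℝ)) * h t + A / (t + 1) ^ 2 := hstep
      _ ≤ (1 - 2 / (t + 1 : ℝ)) * (A / t) + A / (t + 1) ^ 2 := by gcongr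
      _ = A / (t + 1) - A / (t * (t + 1) ^ 2) := by field_simp; ring
      _ ≤ A / (t + 1) := sub_le_self _ (by positivity)

lemma chord_le_div (hC : 0 ≤ C) {r : ℝ} (hr : 0 < r) (hrκ : r ≤ 2 * κ) :
    (6 * κ - r) / 4 * C ≤ 2 * κ ^ 2 * C / r := by
  have hquad : 0 ≤ (2 * κ - r) * (4 * κ - r) :=
    mul_nonneg (by linarith) (by linarith)
  calc (6 * κ - r) / 4 * C ≤ 2 * κ ^ 2 / r * C := by
        refine mul_le_mul_of_nonneg_right ((le_div_iff₀ hr).2 ?_) hC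
        linarith
    _ = 2 * κ ^ 2 * C / r := by ring

lemma le_div_of_stepSize_recursion (hκ : 1 ≤ κ) (hC : 0 ≤ C) (hT : 1 ≤ T)
    (h_zero : h 0 ≤ 3 / 2 * κ * C)
    (hrec : ∀ t < T, h (t + 1) ≤
      (1 - stepSize κ (t + 1) / κ) * h t + stepSize κ (t + 1) ^ 2 * C / 2) :
    h T ≤ 2 * κ ^ 2 * C / T := by
  have : 0 < κ := by linarith
  set m := min T ⌊2 * κ⌋₊
  have hm : 1 ≤ m := le_min hT ((Nat.one_le_floor_iff _).2 (by linarith))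
  have hm_le : (m : ℝ) ≤ 2 * κ :=
    (Nat.cast_le.2 (min_le_right _ _)).trans (Nat.floor_le (by linarith))
  have hearly : h m ≤ (6 * κ - m) / 4 * C := by
    refine le_chord_of_contraction hκ hC h_zero (by linarith) fun t ht => ?_
    have hη : stepSize κ (t + 1) = 1 :=
      stepSize_succ_of_le ((Nat.cast_le.2 (Nat.succ_le_of_lt ht)).trans hm_le)
    simpa [hη] using hrec t (ht.trans_le (min_le_left _ _))
  have hbase : h m ≤ 2 * κ ^ 2 * C / m :=
    hearly.trans (chord_le_div hC (by exact_mod_cast hm) hm_le)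
  refine le_div_of_recursion (by positivity) hm (min_le_left _ _) hbase fun t hmt htT => ?_
  have hη : stepSize κ (t + 1) = 2 * κ / (t + 1 : ℕ) :=
    stepSize_succ_of_ge ((Nat.lt_of_floor_lt (by omega)).le)
  convert hrec t htT using 2 <;> rw [hη] <;> field_simp

lemma le_div_of_gain_recursion (hκ : 1 ≤ κ) (hC : 0 ≤ C) (hT : 1 ≤ T)
    (h_gain : ∀ t < T, h t ≤ κ * s t)
    (h_step : ∀ t < T, h (t + 1) ≤
      h t - stepSize κ (t + 1) * s t + stepSize κ (t + 1) ^ 2 * C / 2)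
    (h_first : h 0 - h 1 ≤ C) :
    h T ≤ 2 * κ ^ 2 * C / T := by
  have hκ_pos : 0 < κ := by linarith
  have h_zero : h 0 ≤ 3 / 2 * κ * C := by
    have hη : stepSize κ (0 + 1) = 1 := stepSize_succ_of_le (by push_cast; linarith)
    have hs : s 0 ≤ 3 / 2 * C := by
      have h_one := h_step 0 hT
      rw [hη, zero_add] at h_one
      linarith
    calc h 0 ≤ κ * s 0 := h_gain 0 hT
      _ ≤ κ * (3 / 2 * C) := by gcongr
      _ = 3 / 2 * κ * C := by ring
  refine le_div_of_stepSize_recursion hκ hC hT h_zero fun t ht => ?_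
  have hs : stepSize κ (t + 1) / κ * h t ≤ stepSize κ (t + 1) * s t :=
    calc stepSize κ (t + 1) / κ * h t ≤ stepSize κ (t + 1) / κ * (κ * s t) :=
          mul_le_mul_of_nonneg_left (h_gain t ht)
            (div_nonneg (stepSize_nonneg hκ_pos.le _) hκ_pos.le)
      _ = stepSize κ (t + 1) * s t := by field_simp
  linarith [h_step t ht]

end Recursion

variable {E : Type*} [AddCommGroup E] [Module ℝ E] {K K₁ K₂ : Set E} {p : Seminorm ℝ E}
  {f : E → ℝ} {g : E → Module.Dual ℝ E} {D L κ τ ε₀ : ℝ} {w y v : E}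

/-- The half of `L`-smoothness on `K` that concerns maximisation: `f` lies above its linear models
up to a quadratic error in the seminorm `p`. The functional `g x` plays the role of the derivative
of `f` at `x`. -/
def IsSmoothBelowOn (p : Seminorm ℝ E) (L : ℝ) (K : Set E) (f : E → ℝ)
    (g : E → Module.Dual ℝ E) : Prop :=
  ∀ x ∈ K, ∀ y ∈ K, f x + g x (y - x) - L / 2 * p (x - y) ^ 2 ≤ f y

/-- `(κ, τ, K₁, K₂)`-local gradient domination of `f` on `K`, with the functional `g x` in the role
of the derivative of `f` at `x`. The supremum is meaningful where `g x` is bounded above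
on `K₂`. -/
def IsLocallyGradientDominated (κ τ : ℝ) (K K₁ K₂ : Set E) (f : E → ℝ)
    (g : E → Module.Dual ℝ E) : Prop :=
  ∀ x ∈ K₁, ∀ y ∈ K, f y - f x ≤ κ * sSup ((fun u => g x (u - x)) '' K₂) + τ

/-- An admissible answer `v` of an `(ε₀, S)`-approximate linear optimization oracle to the
query `φ`; the point `v` itself need not lie in `S`. -/
def IsApproxMaximizer (φ : Module.Dual ℝ E) (ε₀ : ℝ) (S : Set E) (v : E) : Prop :=
  ∀ u ∈ S, φ u - ε₀ ≤ φ v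

/-- The first `T` steps of a Frank–Wolfe run with step sizes `η`, iterates `x` and oracle answers
`z`, where the query at the iterate `x t` is the functional `g (x t)`. -/
structure IsRun (g : E → Module.Dual ℝ E) (K K₂ : Set E) (ε₀ : ℝ) (T : ℕ) (η : ℕ → ℝ)
    (x z : ℕ → E) : Prop where
  answer_mem : ∀ t < T, z (t + 1) ∈ K
  isApproxMaximizer : ∀ t < T, IsApproxMaximizer (g (x t)) ε₀ K₂ (z (t + 1))
  step : ∀ t < T, x (t + 1) = (1 - η (t + 1)) • x t + η (t + 1) • z (t + 1)

lemma isSmoothBelowOn_of_abs_sub_le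
    (hf : ∀ x ∈ K, ∀ y ∈ K, |f y - f x - g x (y - x)| ≤ L / 2 * p (x - y) ^ 2) :
    IsSmoothBelowOn p L K f g := fun x hx y hy => by
  linarith [(abs_le.1 (hf x hx y hy)).1]

lemma IsSmoothBelowOn.le_apply_step (hf : IsSmoothBelowOn p L K f g) (hL : 0 ≤ L) {η : ℝ}
    (hw : w ∈ K) (hstep : (1 - η) • w + η • v ∈ K) (hD : p (w - v) ≤ D) :
    f w + η * g w (v - w) - η ^ 2 * (L * D ^ 2) / 2 ≤ f ((1 - η) • w + η • v) := by
  have hsub : (1 - η) • w + η • v - w = η • (v - w) := by module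
  have hsub' : w - ((1 - η) • w + η • v) = η • (w - v) := by module
  have hdist : p (w - ((1 - η) • w + η • v)) ^ 2 ≤ η ^ 2 * D ^ 2 := by
    rw [hsub', map_smul_eq_mul, mul_pow, Real.norm_eq_abs, sq_abs]
    gcongr
  calc f w + η * g w (v - w) - η ^ 2 * (L * D ^ 2) / 2
      = f w + g w ((1 - η) • w + η • v - w) - L / 2 * (η ^ 2 * D ^ 2) := by
        rw [hsub, map_smul, smul_eq_mul]; ring
    _ ≤ f w + g w ((1 - η) • w + η • v - w) - L / 2 * p (w - ((1 - η) • w + η • v)) ^ 2 := by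
        gcongr
    _ ≤ f ((1 - η) • w + η • v) := hf w hw _ hstep

lemma IsLocallyGradientDominated.sub_le (hf : IsLocallyGradientDominated κ τ K K₁ K₂ f g)
    (hκ : 0 ≤ κ) (hK₂ : K₂.Nonempty) (hw : w ∈ K₁) (hy : y ∈ K)
    (hv : IsApproxMaximizer (g w) ε₀ K₂ v) :
    f y - f w ≤ κ * (g w (v - w) + ε₀) + τ := by
  have hsup : sSup ((fun u => g w (u - w)) '' K₂) ≤ g w (v - w) + ε₀ := by
    refine csSup_le (hK₂.image _) (Set.forall_mem_image.2 fun u hu => ?_)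
    simp only [map_sub]
    linarith [hv u hu]
  exact (hf w hw y hy).trans (by gcongr)

end FrankWolfe

open FrankWolfe in
theorem frank_wolfe_gradient_dominated_general {E : Type*} [AddCommGroup E] [Module ℝ E]
    {K K₁ K₂ : Set E} {p : Seminorm ℝ E} {f : E → ℝ} {g : E → Module.Dual ℝ E}
    {D L H ε₀ κ τ : ℝ} {T : ℕ} {x z : ℕ → E}
    (hK₁ : K₁ ⊆ K) (hK₂ : K₂.Nonempty) (hL : 0 ≤ L) (hκ : 1 ≤ κ)
    (hdiam : ∀ x ∈ K, ∀ y ∈ K, p (x - y) ≤ D) (hsmooth : IsSmoothBelowOn p L K f g)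
    (hosc : ∀ x ∈ K, ∀ y ∈ K, f y - f x ≤ H)
    (hgraddom : IsLocallyGradientDominated κ τ K K₁ K₂ f g) (hT : 1 ≤ T)
    (hrun : IsRun g K K₂ ε₀ T (stepSize κ) x z) (hiter : ∀ t ≤ T, x t ∈ K₁) :
    ∀ y ∈ K, f y - f (x T) ≤ 2 * κ ^ 2 * max (L * D ^ 2) H / T + τ + κ * ε₀ := by
  intro y hy
  set C := max (L * D ^ 2) H
  have hC : 0 ≤ C := le_max_of_le_left (by positivity)
  have hxK : ∀ t ≤ T, x t ∈ K := fun t ht => hK₁ (hiter t ht)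
  let gain (t : ℕ) : ℝ := g (x t) (z (t + 1) - x t)
  let gap (t : ℕ) : ℝ := f y - f (x t) - τ - κ * ε₀
  have hgain : ∀ t < T, gap t ≤ κ * gain t := fun t ht => by
    linarith [hgraddom.sub_le (by linarith) hK₂ (hiter t ht.le) hy (hrun.isApproxMaximizer t ht)]
  have hstep : ∀ t < T, gap (t + 1) ≤
      gap t - stepSize κ (t + 1) * gain t + stepSize κ (t + 1) ^ 2 * C / 2 := fun t ht => by
    have hascent := hsmooth.le_apply_step hL (hxK t ht.le) (hrun.step t ht ▸ hxK (t + 1) ht)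
      (hdiam _ (hxK t ht.le) _ (hrun.answer_mem t ht))
    rw [← hrun.step t ht] at hascent
    have hLC : stepSize κ (t + 1) ^ 2 * (L * D ^ 2) ≤ stepSize κ (t + 1) ^ 2 * C := by
      gcongr
      exact le_max_left _ _
    linarith
  have hfirst : gap 0 - gap 1 ≤ C := by
    linarith [hosc _ (hxK 0 T.zero_le) _ (hxK 1 hT), le_max_right (L * D ^ 2) H]
  linarith [le_div_of_gain_recursion hκ hC hT hgain hstep hfirst]

/-- **Frank–Wolfe, gradient-dominated case.**
Under the Frank–Wolfe setup, if `κ ≥ 1`, the step sizes are `η t = min 1 (2κ/t)`,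
`f` is `(κ, τ, K₁, K₂)`-locally gradient dominated, and all iterates `x 0, …, x T`
lie in `K₁ ⊆ K`, then `max_{x ∈ K} f x − f (x T) ≤ 2κ²·max{L·D², H}/T + τ + κ·ε₀`. -/
theorem frank_wolfe_gradient_dominated {d : ℕ} (K K₁ K₂ : Set (EuclideanSpace ℝ (Fin d)))
    (hKconv : Convex ℝ K) (hKcomp : IsCompact K)
    (hK₁sub : K₁ ⊆ K) (hK₂sub : K₂ ⊆ K) (hK₂ne : K₂.Nonempty)
    (p : Seminorm ℝ (EuclideanSpace ℝ (Fin d))) (D L H ε₀ κ τ : ℝ)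
    (hD : 0 < D) (hL : 0 < L) (hH : 0 ≤ H) (hε₀ : 0 ≤ ε₀) (hκ : 1 ≤ κ)
    (hdiam : ∀ x ∈ K, ∀ y ∈ K, p (x - y) ≤ D)
    (f : EuclideanSpace ℝ (Fin d) → ℝ)
    (hdiff : ∀ x ∈ K, DifferentiableAt ℝ f x)
    (hsmooth : ∀ x ∈ K, ∀ y ∈ K,
      |f y - f x - ⟪gradient f x, y - x⟫| ≤ L / 2 * (p (x - y)) ^ 2)
    (hbound : ∀ x ∈ K, f x ∈ Set.Icc (0 : ℝ) H)
    (hgraddom : ∀ w ∈ K₁, ∀ y ∈ K,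
      f y - f w ≤ κ * sSup ((fun u => ⟪gradient f w, u - w⟫) '' K₂) + τ)
    (O : EuclideanSpace ℝ (Fin d) → EuclideanSpace ℝ (Fin d))
    (hOmem : ∀ v, O v ∈ K)
    (horacle : ∀ v, ∀ u ∈ K₂, ⟪v, u⟫ - ε₀ ≤ ⟪v, O v⟫)
    (T : ℕ) (hT : 1 ≤ T)
    (η : ℕ → ℝ) (x z : ℕ → EuclideanSpace ℝ (Fin d))
    (hx0 : x 0 ∈ K)
    (hη : ∀ t, 1 ≤ t → t ≤ T → η t = min 1 (2 * κ / t))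
    (hz : ∀ t, 1 ≤ t → t ≤ T → z t = O (gradient f (x (t - 1))))
    (hx : ∀ t, 1 ≤ t → t ≤ T → x t = (1 - η t) • x (t - 1) + η t • z t)
    (hiter : ∀ t, t ≤ T → x t ∈ K₁) :
    ∀ y ∈ K, f y - f (x T) ≤ 2 * κ ^ 2 * max (L * D ^ 2) H / T + τ + κ * ε₀ := by
  have hsmooth_below : FrankWolfe.IsSmoothBelowOn p L K f fun w => innerₗ _ (gradient f w) :=
    FrankWolfe.isSmoothBelowOn_of_abs_sub_le hsmooth
  have hosc : ∀ w ∈ K, ∀ y ∈ K, f y - f w ≤ H := fun w hw y hy => by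
    linarith [(hbound y hy).2, (hbound w hw).1]
  have hstepSize : ∀ t < T, η (t + 1) = FrankWolfe.stepSize κ (t + 1) := fun t ht =>
    hη (t + 1) t.succ_pos ht
  have hrun : FrankWolfe.IsRun (fun w => innerₗ _ (gradient f w)) K K₂ ε₀ T
      (FrankWolfe.stepSize κ) x z :=
    { answer_mem := fun t ht => hz (t + 1) t.succ_pos ht ▸ hOmem _
      isApproxMaximizer := fun t ht => hz (t + 1) t.succ_pos ht ▸ horacle (gradient f (x t))
      step := fun t ht => hstepSize t ht ▸ hx (t + 1) t.succ_pos ht }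
  exact frank_wolfe_gradient_dominated_general hK₁sub hK₂ne hL.le hκ hdiam hsmooth_below hosc
    hgraddom hT hrun hiter
end

section
/- Under the Frank–Wolfe setup, suppose every step size satisfies |L·D²·η_t − ∇f(x_{t−1})ᵀ(z_t − x_{t−1})| ≤ ε for some ε ≥ 0. Then min_{1≤t≤T} (∇f(x_{t−1})ᵀ(z_t − x_{t−1}))² ≤ 2·H·L·D²/T + ε². -/
open scoped RealInnerProductSpace

/-!
Write `g = ⟪∇f(x), z - x⟫` and `c = L D²`. Smoothness along the segment from `x` to `z` bounds the
increase `Δ` of `f` in one step from below by `η g - c η² / 2`, and completing the square turns this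
into `2 c Δ ≥ g² - (c η - g)² ≥ g² - ε²`. These bounds telescope, and `f` increases by at most `H`
in total, so the average of `g² - ε²` over `T` steps is at most `2 c H / T`.
-/

section OrderedField

variable {𝕜 : Type*} [Field 𝕜] [LinearOrder 𝕜] [IsStrictOrderedRing 𝕜]

theorem exists_le_div_of_le_sub_succ {a u : ℕ → 𝕜} {T : ℕ} (hT : 0 < T)
    (h : ∀ t < T, a t ≤ u (t + 1) - u t) : ∃ t < T, a t ≤ (u T - u 0) / T := by
  have hsum : ∑ t ∈ Finset.range T, a t ≤ ∑ _t ∈ Finset.range T, (u T - u 0) / T := by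
    calc ∑ t ∈ Finset.range T, a t
        ≤ ∑ t ∈ Finset.range T, (u (t + 1) - u t) :=
          Finset.sum_le_sum fun t ht => h t (Finset.mem_range.mp ht)
      _ = u T - u 0 := Finset.sum_range_sub u T
      _ = ∑ _t ∈ Finset.range T, (u T - u 0) / T := by
          rw [Finset.sum_const, Finset.card_range, nsmul_eq_mul,
            mul_div_cancel₀ _ (Nat.cast_ne_zero.mpr hT.ne')]
  obtain ⟨t, ht, hle⟩ :=
    Finset.exists_le_of_sum_le (Finset.nonempty_range_iff.mpr hT.ne') hsum
  exact ⟨t, Finset.mem_range.mp ht, hle⟩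

theorem sq_sub_sq_le_of_abs_mul_sub_le {c η g ε : 𝕜} (h : |c * η - g| ≤ ε) :
    g ^ 2 - ε ^ 2 ≤ 2 * c * (η * g - c / 2 * η ^ 2) := by
  have hsq : (c * η - g) ^ 2 ≤ ε ^ 2 := sq_le_sq.mpr (h.trans (le_abs_self ε))
  calc g ^ 2 - ε ^ 2 ≤ g ^ 2 - (c * η - g) ^ 2 := by gcongr
    _ = 2 * c * (η * g - c / 2 * η ^ 2) := by ring

theorem mem_of_forall_succ_eq_convex_combination {E : Type*} [AddCommGroup E] [Module 𝕜 E]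
    {K : Set E} {T : ℕ} {η : ℕ → 𝕜} {x z : ℕ → E}
    (hK : Convex 𝕜 K) (hx₀ : x 0 ∈ K) (hη : ∀ t < T, η (t + 1) ∈ Set.Icc (0 : 𝕜) 1)
    (hz : ∀ t < T, z (t + 1) ∈ K)
    (hx : ∀ t < T, x (t + 1) = (1 - η (t + 1)) • x t + η (t + 1) • z (t + 1)) :
    ∀ t ≤ T, x t ∈ K := by
  intro t ht
  induction t with
  | zero => exact hx₀
  | succ t ih =>
    obtain ⟨hη₀, hη₁⟩ := hη t ht
    rw [hx t ht]
    exact hK (ih (Nat.le_of_succ_le ht)) (hz t ht) (sub_nonneg.mpr hη₁) hη₀ (sub_add_cancel 1 _)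

end OrderedField

section ProximalSubgradient

variable {E : Type*} [AddCommGroup E] [Module ℝ E] {K : Set E}

/-- The linear functional `φ` is a proximal subgradient of `f` at `x` relative to `K`, with constant
`L` and with the quadratic term measured by the seminorm `p`. When `φ` is the derivative of `f` at
`x`, this is the lower half of `L`-smoothness, which bounds the growth of `f` along a step. -/
def IsProximalSubgradientOn (p : Seminorm ℝ E) (L : ℝ) (f : E → ℝ) (K : Set E)
    (φ : Module.Dual ℝ E) (x : E) : Prop :=
  ∀ y ∈ K, f x + φ (y - x) - L / 2 * p (y - x) ^ 2 ≤ f y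

namespace IsProximalSubgradientOn

variable {p : Seminorm ℝ E} {L D η ε : ℝ} {f : E → ℝ} {φ : Module.Dual ℝ E} {x z : E}

theorem of_abs_sub_le (h : ∀ y ∈ K, |f y - f x - φ (y - x)| ≤ L / 2 * p (x - y) ^ 2) :
    IsProximalSubgradientOn p L f K φ x := by
  intro y hy
  have hlower := (abs_le.mp (h y hy)).1
  rw [map_sub_rev p y x]
  linarith

theorem mul_sub_le_sub (hφ : IsProximalSubgradientOn p L f K φ x) (hL : 0 ≤ L)
    (hdist : p (z - x) ≤ D) (hmem : (1 - η) • x + η • z ∈ K) :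
    η * φ (z - x) - L * D ^ 2 / 2 * η ^ 2 ≤ f ((1 - η) • x + η • z) - f x := by
  have hdir : (1 - η) • x + η • z - x = η • (z - x) := by module
  have hlower := hφ _ hmem
  rw [hdir, map_smul, smul_eq_mul, map_smul_eq_mul, mul_pow, Real.norm_eq_abs, sq_abs] at hlower
  have hquad : L / 2 * (η ^ 2 * p (z - x) ^ 2) ≤ L / 2 * (η ^ 2 * D ^ 2) := by gcongr
  linarith

theorem sq_sub_sq_le (hφ : IsProximalSubgradientOn p L f K φ x) (hL : 0 ≤ L)
    (hdist : p (z - x) ≤ D) (hmem : (1 - η) • x + η • z ∈ K)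
    (hstep : |L * D ^ 2 * η - φ (z - x)| ≤ ε) :
    φ (z - x) ^ 2 - ε ^ 2 ≤ 2 * (L * D ^ 2) * (f ((1 - η) • x + η • z) - f x) := by
  calc φ (z - x) ^ 2 - ε ^ 2
      ≤ 2 * (L * D ^ 2) * (η * φ (z - x) - L * D ^ 2 / 2 * η ^ 2) :=
        sq_sub_sq_le_of_abs_mul_sub_le hstep
    _ ≤ 2 * (L * D ^ 2) * (f ((1 - η) • x + η • z) - f x) :=
        mul_le_mul_of_nonneg_left (hφ.mul_sub_le_sub hL hdist hmem) (by positivity)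

end IsProximalSubgradientOn

theorem frank_wolfe_min_gap_general {p : Seminorm ℝ E} {D L H ε : ℝ} {f : E → ℝ}
    {φ : E → Module.Dual ℝ E} {T : ℕ} {η : ℕ → ℝ} {x z : ℕ → E}
    (hK : Convex ℝ K) (hL : 0 ≤ L) (hdiam : ∀ x ∈ K, ∀ y ∈ K, p (x - y) ≤ D)
    (hφ : ∀ x ∈ K, IsProximalSubgradientOn p L f K (φ x) x)
    (hH : ∀ y ∈ K, f y - f (x 0) ≤ H) (hT : 0 < T) (hx₀ : x 0 ∈ K)
    (hη : ∀ t < T, η (t + 1) ∈ Set.Icc (0 : ℝ) 1) (hz : ∀ t < T, z (t + 1) ∈ K)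
    (hx : ∀ t < T, x (t + 1) = (1 - η (t + 1)) • x t + η (t + 1) • z (t + 1))
    (hstep : ∀ t < T, |L * D ^ 2 * η (t + 1) - φ (x t) (z (t + 1) - x t)| ≤ ε) :
    ∃ t < T, φ (x t) (z (t + 1) - x t) ^ 2 ≤ 2 * H * L * D ^ 2 / T + ε ^ 2 := by
  have hxK : ∀ t ≤ T, x t ∈ K := mem_of_forall_succ_eq_convex_combination hK hx₀ hη hz hx
  have hgrowth : ∀ t < T, φ (x t) (z (t + 1) - x t) ^ 2 - ε ^ 2 ≤
      2 * (L * D ^ 2) * f (x (t + 1)) - 2 * (L * D ^ 2) * f (x t) := by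
    intro t ht
    rw [← mul_sub, hx t ht]
    exact (hφ _ (hxK t ht.le)).sq_sub_sq_le hL (hdiam _ (hz t ht) _ (hxK t ht.le))
      (hx t ht ▸ hxK (t + 1) ht) (hstep t ht)
  obtain ⟨t, ht, hgap⟩ :=
    exists_le_div_of_le_sub_succ (u := fun t => 2 * (L * D ^ 2) * f (x t)) hT hgrowth
  refine ⟨t, ht, sub_le_iff_le_add.mp (hgap.trans ?_)⟩
  calc (2 * (L * D ^ 2) * f (x T) - 2 * (L * D ^ 2) * f (x 0)) / T
      = 2 * (L * D ^ 2) * (f (x T) - f (x 0)) / T := by rw [mul_sub]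
    _ ≤ 2 * (L * D ^ 2) * H / T := by
        gcongr
        exact hH _ (hxK T le_rfl)
    _ = 2 * H * L * D ^ 2 / T := by ring

end ProximalSubgradient

/-- **Frank–Wolfe, non-convex case (minimum squared Frank-Wolfe gap).**
Under the Frank–Wolfe setup, if every step size satisfies
`|L·D²·η t − ⟪∇f(x (t-1)), z t − x (t-1)⟫| ≤ ε`, then
`min_{1 ≤ t ≤ T} ⟪∇f(x (t-1)), z t − x (t-1)⟫² ≤ 2·H·L·D²/T + ε²`. -/
theorem frank_wolfe_min_gap {d : ℕ} (K K₂ : Set (EuclideanSpace ℝ (Fin d)))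
    (hKconv : Convex ℝ K) (hKcomp : IsCompact K) (hK₂sub : K₂ ⊆ K) (hK₂ne : K₂.Nonempty)
    (p : Seminorm ℝ (EuclideanSpace ℝ (Fin d))) (D L H ε₀ ε : ℝ)
    (hD : 0 < D) (hL : 0 < L) (hH : 0 ≤ H) (hε₀ : 0 ≤ ε₀) (hε : 0 ≤ ε)
    (hdiam : ∀ x ∈ K, ∀ y ∈ K, p (x - y) ≤ D)
    (f : EuclideanSpace ℝ (Fin d) → ℝ)
    (hdiff : ∀ x ∈ K, DifferentiableAt ℝ f x)
    (hsmooth : ∀ x ∈ K, ∀ y ∈ K,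
      |f y - f x - ⟪gradient f x, y - x⟫| ≤ L / 2 * (p (x - y)) ^ 2)
    (hbound : ∀ x ∈ K, f x ∈ Set.Icc (0 : ℝ) H)
    (O : EuclideanSpace ℝ (Fin d) → EuclideanSpace ℝ (Fin d))
    (hOmem : ∀ v, O v ∈ K)
    (horacle : ∀ v, ∀ u ∈ K₂, ⟪v, u⟫ - ε₀ ≤ ⟪v, O v⟫)
    (T : ℕ) (hT : 1 ≤ T)
    (η : ℕ → ℝ) (x z : ℕ → EuclideanSpace ℝ (Fin d))
    (hx0 : x 0 ∈ K)
    (hη : ∀ t, 1 ≤ t → t ≤ T → η t ∈ Set.Icc (0 : ℝ) 1)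
    (hz : ∀ t, 1 ≤ t → t ≤ T → z t = O (gradient f (x (t - 1))))
    (hx : ∀ t, 1 ≤ t → t ≤ T → x t = (1 - η t) • x (t - 1) + η t • z t)
    (hstep : ∀ t, 1 ≤ t → t ≤ T →
      |L * D ^ 2 * η t - ⟪gradient f (x (t - 1)), z t - x (t - 1)⟫| ≤ ε) :
    ∃ t, 1 ≤ t ∧ t ≤ T ∧
      ⟪gradient f (x (t - 1)), z t - x (t - 1)⟫ ^ 2 ≤ 2 * H * L * D ^ 2 / T + ε ^ 2 := by
  obtain ⟨t, ht, hgap⟩ := frank_wolfe_min_gap_general (H := H)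
    (φ := fun x => innerₗ _ (gradient f x)) hKconv hL.le hdiam
    (fun x hx => .of_abs_sub_le (hsmooth x hx))
    (fun y hy => by linarith [(hbound _ hx0).1, (hbound y hy).2]) hT hx0
    (fun t ht => hη (t + 1) t.succ_pos ht)
    (fun t ht => hz (t + 1) t.succ_pos ht ▸ hOmem _)
    (fun t ht => hx (t + 1) t.succ_pos ht)
    (fun t ht => hstep (t + 1) t.succ_pos ht)
  exact ⟨t + 1, t.succ_pos, ht, hgap⟩
end

section
/- Under the Frank–Wolfe setup, suppose f is (κ, τ, K₁, K₂)-locally gradient dominated with κ > 0 and x_{t−1} ∈ K₁ for some step t. Writing h_s = max_{x∈K} f(x) − f(x_s), the single Frank–Wolfe step with any step size η_t ∈ [0,1] satisfies h_t ≤ (1 − η_t/κ)·h_{t−1} + η_t²·L·D²/2 + η_t·(ε₀ + τ/κ). -/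
open scoped RealInnerProductSpace

/-!
By smoothness, the step from `w` to `w + η (z - w)` raises `f` by at least
`η φ (z - w) - η² L D² / 2`, where `φ` is the derivative at `w`. The oracle guarantee bounds
`φ (z - w) + ε` from below by the Frank–Wolfe gap at `w`, and local gradient domination bounds
that gap from below by `(h - τ) / κ`, where `h = sup f - f w`. Subtracting the increase from `h`
gives the claim.
-/

open AffineMap (lineMap)

section PrimalGap

variable {α : Type*} {K : Set α} {f : α → ℝ}

/-- The suboptimality `h = sup_K f - f w` of `w` when maximizing `f` over `K`. As `sSup` is `0` on
unbounded sets, it is meaningful only if `f` is bounded above on `K`. -/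
noncomputable def primalGap (f : α → ℝ) (K : Set α) (w : α) : ℝ :=
  sSup (f '' K) - f w

theorem primalGap_sub_primalGap (f : α → ℝ) (K : Set α) (v w : α) :
    primalGap f K v - primalGap f K w = f w - f v :=
  sub_sub_sub_cancel_left _ _ _

theorem primalGap_le {w : α} {B : ℝ} (hK : K.Nonempty) (hB : ∀ y ∈ K, f y - f w ≤ B) :
    primalGap f K w ≤ B :=
  sub_le_iff_le_add.mpr <| csSup_le (hK.image f) <|
    Set.forall_mem_image.mpr fun y hy ↦ sub_le_iff_le_add.mp (hB y hy)

end PrimalGap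

section FrankWolfeStep

variable {E : Type*} [AddCommGroup E] [Module ℝ E] {K S : Set E} {f : E → ℝ} {φ : E →ₗ[ℝ] ℝ}
  {p : Seminorm ℝ E} {w z : E} {L D η ε κ τ : ℝ}

/-- The Frank–Wolfe gap `sup_{u ∈ S} φ (u - w)` at `w`, with `φ` in the role of the derivative of
the objective at `w`. As `sSup` is `0` on empty and on unbounded sets, it is meaningful only if `S`
is nonempty and `φ` is bounded above on `S`. -/
noncomputable def frankWolfeGap (φ : E →ₗ[ℝ] ℝ) (S : Set E) (w : E) : ℝ :=
  sSup ((fun u ↦ φ (u - w)) '' S)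

theorem frankWolfeGap_le_of_approx_max (hS : S.Nonempty) (hz : ∀ u ∈ S, φ u - ε ≤ φ z) :
    frankWolfeGap φ S w ≤ φ (z - w) + ε := by
  refine csSup_le (hS.image _) (Set.forall_mem_image.mpr fun u hu ↦ ?_)
  rw [map_sub, map_sub]
  linarith [hz u hu]

theorem add_sub_le_apply_lineMap_of_neg_quadratic_le (hK : Convex ℝ K)
    (hf : ∀ y ∈ K, -(L / 2 * p (w - y) ^ 2) ≤ f y - f w - φ (y - w))
    (hw : w ∈ K) (hz : z ∈ K) (hη : η ∈ Set.Icc (0 : ℝ) 1) :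
    f w + η * φ (z - w) - η ^ 2 * (L / 2 * p (w - z) ^ 2) ≤ f (lineMap w z η) := by
  have hφ : φ (lineMap w z η - w) = η * φ (z - w) := by
    rw [← vsub_eq_sub, AffineMap.lineMap_vsub_left, map_smul, smul_eq_mul, vsub_eq_sub]
  have hp : p (w - lineMap w z η) ^ 2 = η ^ 2 * p (w - z) ^ 2 := by
    rw [← vsub_eq_sub, AffineMap.left_vsub_lineMap, map_smul_eq_mul, mul_pow, Real.norm_eq_abs,
      sq_abs, vsub_eq_sub]
  have h := hf _ (hK.lineMap_mem hw hz hη)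
  rw [hφ, hp] at h
  linarith

-- The slope `φ` can be the derivative of a smooth `f`, but also, with `L = 0`, a subgradient of a
-- nondifferentiable convex `f`.
theorem frank_wolfe_single_step_general (hK : Convex ℝ K) (hS : S.Nonempty) (hL : 0 ≤ L)
    (hκ : 0 < κ) (hw : w ∈ K) (hz : z ∈ K) (hD : p (w - z) ≤ D)
    (hf : ∀ y ∈ K, -(L / 2 * p (w - y) ^ 2) ≤ f y - f w - φ (y - w))
    (hdom : ∀ y ∈ K, f y - f w ≤ κ * frankWolfeGap φ S w + τ)
    (hmax : ∀ u ∈ S, φ u - ε ≤ φ z) (hη : η ∈ Set.Icc (0 : ℝ) 1) :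
    primalGap f K (lineMap w z η) ≤
      (1 - η / κ) * primalGap f K w + η ^ 2 * L * D ^ 2 / 2 + η * (ε + τ / κ) := by
  have hincrease := add_sub_le_apply_lineMap_of_neg_quadratic_le hK hf hw hz hη
  have hcurvature : L / 2 * p (w - z) ^ 2 ≤ L / 2 * D ^ 2 := by gcongr
  have hgap : (primalGap f K w - τ) / κ ≤ φ (z - w) + ε :=
    calc (primalGap f K w - τ) / κ ≤ frankWolfeGap φ S w :=
          (div_le_iff₀' hκ).mpr (sub_le_iff_le_add.mpr (primalGap_le ⟨w, hw⟩ hdom))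
      _ ≤ φ (z - w) + ε := frankWolfeGap_le_of_approx_max hS hmax
  calc primalGap f K (lineMap w z η)
      = primalGap f K w - (f (lineMap w z η) - f w) := by
        rw [← primalGap_sub_primalGap f K w, sub_sub_cancel]
    _ ≤ primalGap f K w - η * φ (z - w) + η ^ 2 * (L / 2 * p (w - z) ^ 2) := by linarith
    _ ≤ primalGap f K w - η * ((primalGap f K w - τ) / κ - ε) + η ^ 2 * (L / 2 * D ^ 2) := by
        have hη₀ := hη.1
        gcongr
        exact sub_le_iff_le_add.mpr hgap
    _ = (1 - η / κ) * primalGap f K w + η ^ 2 * L * D ^ 2 / 2 + η * (ε + τ / κ) := by ring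

end FrankWolfeStep

/-- **Frank–Wolfe, single-step progress under local gradient domination.**
Under the Frank–Wolfe setup, if `f` is `(κ, τ, K₁, K₂)`-locally gradient dominated
with `κ > 0` and `x (t-1) ∈ K₁` for some step `t`, then, writing
`h s = max_{x ∈ K} f x − f (x s)`, a single Frank–Wolfe step with any step size
`η t ∈ [0,1]` satisfies
`h t ≤ (1 − η t/κ)·h (t-1) + η t²·L·D²/2 + η t·(ε₀ + τ/κ)`. -/
theorem frank_wolfe_single_step {d : ℕ} (K K₁ K₂ : Set (EuclideanSpace ℝ (Fin d)))
    (hKconv : Convex ℝ K) (hKcomp : IsCompact K)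
    (hK₁sub : K₁ ⊆ K) (hK₂sub : K₂ ⊆ K) (hK₂ne : K₂.Nonempty)
    (p : Seminorm ℝ (EuclideanSpace ℝ (Fin d))) (D L H ε₀ κ τ : ℝ)
    (hD : 0 < D) (hL : 0 < L) (hH : 0 ≤ H) (hε₀ : 0 ≤ ε₀) (hκ : 0 < κ)
    (hdiam : ∀ x ∈ K, ∀ y ∈ K, p (x - y) ≤ D)
    (f : EuclideanSpace ℝ (Fin d) → ℝ)
    (hdiff : ∀ x ∈ K, DifferentiableAt ℝ f x)
    (hsmooth : ∀ x ∈ K, ∀ y ∈ K,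
      |f y - f x - ⟪gradient f x, y - x⟫| ≤ L / 2 * (p (x - y)) ^ 2)
    (hbound : ∀ x ∈ K, f x ∈ Set.Icc (0 : ℝ) H)
    (hgraddom : ∀ w ∈ K₁, ∀ y ∈ K,
      f y - f w ≤ κ * sSup ((fun u => ⟪gradient f w, u - w⟫) '' K₂) + τ)
    (O : EuclideanSpace ℝ (Fin d) → EuclideanSpace ℝ (Fin d))
    (hOmem : ∀ v, O v ∈ K)
    (horacle : ∀ v, ∀ u ∈ K₂, ⟪v, u⟫ - ε₀ ≤ ⟪v, O v⟫)
    (η : ℕ → ℝ) (x z : ℕ → EuclideanSpace ℝ (Fin d))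
    (t : ℕ) (ht : 1 ≤ t)
    (hprev : x (t - 1) ∈ K₁)
    (hη : η t ∈ Set.Icc (0 : ℝ) 1)
    (hz : z t = O (gradient f (x (t - 1))))
    (hx : x t = (1 - η t) • x (t - 1) + η t • z t) :
    sSup (f '' K) - f (x t) ≤
      (1 - η t / κ) * (sSup (f '' K) - f (x (t - 1))) +
        η t ^ 2 * L * D ^ 2 / 2 + η t * (ε₀ + τ / κ) := by
  have hzK : z t ∈ K := hz ▸ hOmem _
  have hwK : x (t - 1) ∈ K := hK₁sub hprev
  rw [hx, ← AffineMap.lineMap_apply_module]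
  exact frank_wolfe_single_step_general (φ := innerₗ _ (gradient f (x (t - 1)))) hKconv hK₂ne hL.le
    hκ hwK hzK (hdiam _ hwK _ hzK) (fun y hy ↦ (abs_le.mp (hsmooth _ hwK y hy)).1)
    (hgraddom _ hprev) (hz ▸ horacle _) hη
end

section
/- Let C ≥ 1 and D, E, H ≥ 0, and let (g_t)_{t≥0} be a nonnegative sequence with g_t ≤ H for all t, satisfying g_t ≤ (1 − σ_t/C)·g_{t−1} + σ_t²·D + σ_t·E for all t ≥ 1, where σ_t = min{1, 2C/t}. Then for every t ≥ 1, g_t ≤ 2C²·max{2D, H}/t + C·E. -/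
/-!
The recursion without its `D` term has the fixed point `C * E`, and on top of it a Chung-type
induction gives the rate `1 / t`: the bound `K / t` is stable under the contraction factor
`1 - c / t` as long as the perturbation `A / t ^ 2` satisfies `A ≤ (c - 1) * K`. With `σ t = 2C / t`
this applies for `c = 2`, `A = 4C²D` and `K = 2C² * max (2D) H`. In the initial phase `t ≤ 2C²`,
which contains all `t` with `σ t = 1`, the a priori bound `H ≤ K / t` is already enough.
-/

section Recurrence

variable {𝕜 : Type*} [Field 𝕜] [LinearOrder 𝕜] [IsStrictOrderedRing 𝕜]

lemma one_sub_div_mul_div_sub_one_add_div_sq_le {c t A K : 𝕜} (hc : 1 ≤ c) (ht : 1 < t)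
    (hK : 0 ≤ K) (hA : A ≤ (c - 1) * K) :
    (1 - c / t) * (K / (t - 1)) + A / t ^ 2 ≤ K / t := by
  have ht₀ : 0 < t := one_pos.trans ht
  have ht₁ : 0 < t - 1 := sub_pos.2 ht
  have hcK : 0 ≤ (c - 1) * K := mul_nonneg (sub_nonneg.2 hc) hK
  have hsq : t * (t - 1) ≤ t ^ 2 := by linarith [mul_sub_one t t, sq t]
  calc (1 - c / t) * (K / (t - 1)) + A / t ^ 2
      ≤ (1 - c / t) * (K / (t - 1)) + (c - 1) * K / (t * (t - 1)) :=
        add_le_add_right (div_le_div₀ hcK hA (mul_pos ht₀ ht₁) hsq) _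
    _ = K / t := by field_simp; ring

lemma le_div_add_of_le_one_sub_div_mul_add {c t A B K x y : 𝕜} (hc : 1 ≤ c) (ht : 1 < t)
    (hct : c ≤ t) (hK : 0 ≤ K) (hA : A ≤ (c - 1) * K) (hx : x ≤ K / (t - 1) + B)
    (hy : y ≤ (1 - c / t) * x + A / t ^ 2 + c / t * B) : y ≤ K / t + B := by
  have hfactor : 0 ≤ 1 - c / t := sub_nonneg.2 (div_le_one_of_le₀ hct (by linarith))
  calc y ≤ (1 - c / t) * x + A / t ^ 2 + c / t * B := hy
    _ ≤ (1 - c / t) * (K / (t - 1) + B) + A / t ^ 2 + c / t * B := by gcongr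
    _ = (1 - c / t) * (K / (t - 1)) + A / t ^ 2 + B := by ring
    _ ≤ K / t + B := by gcongr; exact one_sub_div_mul_div_sub_one_add_div_sq_le hc ht hK hA

lemma le_div_add_of_recurrence {c A B K T : 𝕜} {g : ℕ → 𝕜} (hc : 1 ≤ c) (hcT : c ≤ T)
    (hK : 0 ≤ K) (hA : A ≤ (c - 1) * K)
    (hinit : ∀ t : ℕ, 1 ≤ t → (t : 𝕜) ≤ T → g t ≤ K / t + B)
    (hrec : ∀ t : ℕ, T < t → g t ≤ (1 - c / t) * g (t - 1) + A / (t : 𝕜) ^ 2 + c / t * B)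
    {t : ℕ} (ht : 1 ≤ t) : g t ≤ K / t + B := by
  induction t, ht using Nat.le_induction with
  | base => exact hinit 1 le_rfl (by simpa only [Nat.cast_one] using hc.trans hcT)
  | succ n _ ih =>
    rcases le_or_gt ((n + 1 : ℕ) : 𝕜) T with hT | hT
    · exact hinit (n + 1) n.succ_pos hT
    · have hprev : g n ≤ K / (((n + 1 : ℕ) : 𝕜) - 1) + B := by
        simpa only [Nat.cast_add_one, add_sub_cancel_right] using ih
      exact le_div_add_of_le_one_sub_div_mul_add hc (by linarith) (by linarith) hK hA hprev
        (hrec (n + 1) hT)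

lemma min_one_two_mul_div_eq {C t : 𝕜} (hC : 1 ≤ C) (ht : 2 * C ^ 2 < t) :
    min 1 (2 * C / t) = 2 * C / t := by
  have hCsq : C ≤ C ^ 2 := le_self_pow₀ hC two_ne_zero
  exact min_eq_right (div_le_one_of_le₀ (by linarith) (by linarith))

theorem recursive_sequence_bound_general {C D E H : 𝕜} (hC : 1 ≤ C) (hE : 0 ≤ E) (hH : 0 ≤ H)
    {g : ℕ → 𝕜} (hgH : ∀ t : ℕ, 1 ≤ t → (t : 𝕜) ≤ 2 * C ^ 2 → g t ≤ H)
    (hrec : ∀ t : ℕ, 2 * C ^ 2 < t →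
      g t ≤ (1 - min 1 (2 * C / t) / C) * g (t - 1) +
        (min 1 (2 * C / t)) ^ 2 * D + min 1 (2 * C / t) * E)
    {t : ℕ} (ht : 1 ≤ t) : g t ≤ 2 * C ^ 2 * max (2 * D) H / t + C * E := by
  have hC₀ : 0 < C := one_pos.trans_le hC
  have hM : 0 ≤ max (2 * D) H := le_max_of_le_right hH
  have hA : 4 * C ^ 2 * D ≤ (2 - 1) * (2 * C ^ 2 * max (2 * D) H) := by
    linarith [mul_le_mul_of_nonneg_left (le_max_left (2 * D) H) (by positivity : 0 ≤ 2 * C ^ 2)]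
  have hK : 0 ≤ 2 * C ^ 2 * max (2 * D) H := mul_nonneg (by positivity) hM
  refine le_div_add_of_recurrence one_le_two (T := 2 * C ^ 2) ?_ hK hA ?_ ?_ ht
  · linarith [one_le_pow₀ hC (n := 2)]
  · intro s hs hsC
    have hs₀ : (0 : 𝕜) < s := Nat.cast_pos.2 hs
    calc g s ≤ max (2 * D) H := (hgH s hs hsC).trans (le_max_right _ _)
      _ ≤ 2 * C ^ 2 * max (2 * D) H / s :=
          (le_div_iff₀' hs₀).2 (mul_le_mul_of_nonneg_right hsC hM)
      _ ≤ 2 * C ^ 2 * max (2 * D) H / s + C * E := le_add_of_nonneg_right (by positivity)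
  · intro s hs
    calc g s ≤ (1 - 2 * C / s / C) * g (s - 1) + (2 * C / s) ^ 2 * D + 2 * C / s * E := by
          simpa only [min_one_two_mul_div_eq hC hs] using hrec s hs
      _ = (1 - 2 / s) * g (s - 1) + 4 * C ^ 2 * D / (s : 𝕜) ^ 2 + 2 / s * (C * E) := by
          rw [mul_div_right_comm, mul_div_cancel_right₀ _ hC₀.ne']
          ring

end Recurrence

/-- **Recursion lemma for Frank–Wolfe step sizes (Claim on the recursive sequence).**
Let `C ≥ 1` and `D, E, H ≥ 0`, and let `(g t)` be a nonnegative sequence bounded by `H`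
satisfying `g t ≤ (1 − σ t/C)·g (t-1) + (σ t)²·D + (σ t)·E` for all `t ≥ 1`, where
`σ t = min 1 (2C/t)`. Then for every `t ≥ 1`, `g t ≤ 2C²·max (2D) H / t + C·E`. -/
theorem recursive_sequence_bound (C D E H : ℝ) (hC : 1 ≤ C) (hD : 0 ≤ D) (hE : 0 ≤ E)
    (hH : 0 ≤ H) (g : ℕ → ℝ) (hg0 : ∀ t, 0 ≤ g t) (hgH : ∀ t, g t ≤ H)
    (hrec : ∀ t : ℕ, 1 ≤ t →
      g t ≤ (1 - min 1 (2 * C / t) / C) * g (t - 1) +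
        (min 1 (2 * C / t)) ^ 2 * D + min 1 (2 * C / t) * E) :
    ∀ t : ℕ, 1 ≤ t → g t ≤ 2 * C ^ 2 * max (2 * D) H / t + C * E :=
  fun _ ht ↦ recursive_sequence_bound_general hC hE hH (fun t _ _ ↦ hgH t)
    (fun t hCt ↦ hrec t (Nat.cast_pos.1 ((by positivity : 0 ≤ 2 * C ^ 2).trans_lt hCt))) ht
end

section
/- For any two policies π and π′, |V^{π′} − V^π − (∇_π V^π)ᵀ(π′ − π)| ≤ (γ/(1−γ)³)·∥π′ − π∥_{∞,1}², i.e., the value function V^π is 2γ/(1−γ)³-smooth in the ∥·∥_{∞,1} norm on the space of policies. -/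
open Finset

noncomputable section

/-- `π` is a stochastic policy: `π s` is a probability distribution over actions. -/
def IsPolicy {S A : Type*} [Fintype A] (π : S → A → ℝ) : Prop :=
  (∀ s a, 0 ≤ π s a) ∧ ∀ s, ∑ a, π s a = 1

/-- `P` is a transition probability model: `P s a` is a distribution over next states. -/
def IsKernel {S A : Type*} [Fintype S] (P : S → A → S → ℝ) : Prop :=
  (∀ s a s', 0 ≤ P s a s') ∧ ∀ s a, ∑ s', P s a s' = 1

/-- `d` is a probability distribution over states. -/
def IsDist {S : Type*} [Fintype S] (d : S → ℝ) : Prop :=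
  (∀ s, 0 ≤ d s) ∧ ∑ s, d s = 1

/-- The Markov operator `P^π` induced by policy `π` acting on distributions over states:
`(P^π d)(s') = ∑_s ∑_a P(s'|s,a)·π(a|s)·d(s)`. -/
def markovStep {S A : Type*} [Fintype S] [Fintype A] (P : S → A → S → ℝ)
    (π : S → A → ℝ) (d : S → ℝ) : S → ℝ :=
  fun s' => ∑ s, ∑ a, P s a s' * π s a * d s

/-- The discounted state-visitation distribution
`d^π_μ(s) = (1−γ) ∑_{t≥0} γ^t Pr(s_t = s | π, s₀ ∼ μ)`. -/
def visitDist {S A : Type*} [Fintype S] [Fintype A] (P : S → A → S → ℝ) (γ : ℝ)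
    (π : S → A → ℝ) (μ : S → ℝ) : S → ℝ :=
  fun s => (1 - γ) * ∑' t : ℕ, γ ^ t * ((markovStep P π)^[t] μ) s

/-- The value function `V^π_μ = E[∑_{t≥0} γ^t r(s_t,a_t)]` with `s₀ ∼ μ`, actions from `π`. -/
def valueV {S A : Type*} [Fintype S] [Fintype A] (P : S → A → S → ℝ) (r : S → A → ℝ)
    (γ : ℝ) (π : S → A → ℝ) (μ : S → ℝ) : ℝ :=
  ∑' t : ℕ, γ ^ t * ∑ s, ((markovStep P π)^[t] μ) s * ∑ a, π s a * r s a

/-- The state-action value function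
`Q^π(s,a) = E[∑_{t≥0} γ^t r(s_t,a_t) | s₀ = s, a₀ = a, actions thereafter from π]`. -/
def valueQ {S A : Type*} [Fintype S] [Fintype A] [DecidableEq S] (P : S → A → S → ℝ)
    (r : S → A → ℝ) (γ : ℝ) (π : S → A → ℝ) (s : S) (a : A) : ℝ :=
  r s a + γ * ∑ s', P s a s' * valueV P r γ π (fun s'' => if s'' = s' then 1 else 0)

/-- The functional policy gradient `(∇_π V^π_μ)(s,a) = (1/(1−γ))·d^π_μ(s)·Q^π(s,a)`. -/
def gradV {S A : Type*} [Fintype S] [Fintype A] [DecidableEq S] (P : S → A → S → ℝ)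
    (r : S → A → ℝ) (γ : ℝ) (π : S → A → ℝ) (μ : S → ℝ) : S → A → ℝ :=
  fun s a => (1 / (1 - γ)) * visitDist P γ π μ s * valueQ P r γ π s a

/-- The pairing `xᵀ y = ∑_{s,a} x(s,a)·y(s,a)` on `ℝ^{S×A}`. -/
def dotSA {S A : Type*} [Fintype S] [Fintype A] (x y : S → A → ℝ) : ℝ :=
  ∑ s, ∑ a, x s a * y s a

/-- The norm `∥x∥_{∞,1} = max_{s∈S} ∑_{a∈A} |x(s,a)|` on `ℝ^{S×A}`. -/
def normInfOne {S A : Type*} [Fintype S] [Fintype A] [Nonempty S] (x : S → A → ℝ) : ℝ :=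
  ⨆ s, ∑ a, |x s a|

/-- The `ℓ₁` (total-variation) norm `∥d∥₁ = ∑_{s∈S} |d s|` on `ℝ^S`. -/
def normL1 {S : Type*} [Fintype S] (d : S → ℝ) : ℝ := ∑ s, |d s|

/-! Let `T_π` be the state transition matrix of `π`, let `G_π = (1 - γ T_π)⁻¹ = ∑ₜ γᵗ T_πᵗ`, and put
`A(s) = ∑ₐ (π' - π)(s,a) Q^π(s,a)`. The gradient pairing is `⟨μ, G_π A⟩`, while the performance
difference lemma reads `V^{π'} - V^π = ⟨μ, G_{π'} A⟩`. The error of the first-order expansion is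
thus `⟨μ, (G_{π'} - G_π) A⟩`, and the resolvent identity
`G_{π'} - G_π = G_{π'} (γ T_{π' - π}) G_π` makes it quadratic in `π' - π`. In the operator norm dual
to `ℓ₁`, each `G` costs a factor `1 / (1 - γ)`, `T_{π' - π}` costs `∥π' - π∥_{∞,1}`, and `A` costs
`∥π' - π∥_{∞,1} / (1 - γ)`. -/

open Matrix
open scoped Matrix.Norms.Operator

section Norms

variable {ι κ : Type*} [Fintype ι]

lemma normL1_nonneg (d : ι → ℝ) : 0 ≤ normL1 d :=
  sum_nonneg fun _ _ => abs_nonneg _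

lemma IsDist.normL1_eq_one {d : ι → ℝ} (hd : IsDist d) : normL1 d = 1 := by
  simp only [normL1, abs_of_nonneg (hd.1 _), hd.2]

lemma IsKernel.normL1_eq_one {P : ι → κ → ι → ℝ} (hP : IsKernel P) (i : ι) (k : κ) :
    normL1 (P i k) = 1 :=
  IsDist.normL1_eq_one ⟨hP.1 i k, hP.2 i k⟩

lemma abs_dotProduct_le_normL1_mul_norm (d f : ι → ℝ) : |d ⬝ᵥ f| ≤ normL1 d * ‖f‖ := by
  simp only [dotProduct, normL1, sum_mul]
  refine (abs_sum_le_sum_abs _ _).trans (sum_le_sum fun i _ => ?_)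
  rw [abs_mul]
  exact mul_le_mul_of_nonneg_left (norm_le_pi_norm f i) (abs_nonneg _)

variable [Fintype κ]

lemma norm_le_of_forall_abs_le {x : ι → κ → ℝ} {c : ℝ} (hc : 0 ≤ c) (hx : ∀ i j, |x i j| ≤ c) :
    ‖x‖ ≤ c :=
  (pi_norm_le_iff_of_nonneg hc).2 fun i => (pi_norm_le_iff_of_nonneg hc).2 (hx i)

variable [Nonempty ι]

lemma normL1_le_normInfOne (x : ι → κ → ℝ) (i : ι) : normL1 (x i) ≤ normInfOne x :=
  le_ciSup (f := fun i => normL1 (x i)) (Set.finite_range _).bddAbove i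

lemma normInfOne_nonneg (x : ι → κ → ℝ) : 0 ≤ normInfOne x :=
  Real.iSup_nonneg fun i => normL1_nonneg (x i)

lemma IsPolicy.normInfOne_eq_one {π : ι → κ → ℝ} (hπ : IsPolicy π) : normInfOne π = 1 := by
  simp only [normInfOne, abs_of_nonneg (hπ.1 _ _), hπ.2, ciSup_const]

end Norms

section ActionSum

variable {S A : Type*} [Fintype A]

/-- The function `s ↦ ∑ₐ x(s,a) f(s,a)` on states: the mean of `f(s,·)` under `x` when `x` is a
policy, and the change of that mean when `x` is a difference of policies. -/
def actionSum (x f : S → A → ℝ) : S → ℝ := fun s => x s ⬝ᵥ f s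

lemma actionSum_sub_left (x y f : S → A → ℝ) :
    actionSum (x - y) f = actionSum x f - actionSum y f :=
  funext fun _ => sub_dotProduct _ _ _

lemma actionSum_add_right (x f g : S → A → ℝ) :
    actionSum x (f + g) = actionSum x f + actionSum x g :=
  funext fun _ => dotProduct_add _ _ _

lemma actionSum_smul_right (x : S → A → ℝ) (c : ℝ) (f : S → A → ℝ) :
    actionSum x (c • f) = c • actionSum x f :=
  funext fun _ => dotProduct_smul c _ _

lemma norm_actionSum_le [Fintype S] [Nonempty S] (x f : S → A → ℝ) :
    ‖actionSum x f‖ ≤ normInfOne x * ‖f‖ := by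
  refine (pi_norm_le_iff_of_nonneg (mul_nonneg (normInfOne_nonneg x) (norm_nonneg f))).2 fun s => ?_
  calc ‖x s ⬝ᵥ f s‖ ≤ normL1 (x s) * ‖f s‖ := abs_dotProduct_le_normL1_mul_norm _ _
    _ ≤ normInfOne x * ‖f‖ :=
      mul_le_mul (normL1_le_normInfOne x s) (norm_le_pi_norm f s) (norm_nonneg _)
        (normInfOne_nonneg x)

end ActionSum

section Transition

variable {S A : Type*}

/-- The function `(s,a) ↦ ∑_{s'} P(s'|s,a) f(s')`: the expectation of `f` at the next state. -/
def nextStateMean [Fintype S] (P : S → A → S → ℝ) (f : S → ℝ) : S → A → ℝ := fun s a => P s a ⬝ᵥ f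

/-- The state transition matrix `T_π(s,s') = ∑ₐ π(s,a) P(s'|s,a)`. Here `π` may be an arbitrary
signed weight, in particular a difference of policies. -/
def transitionMatrix [Fintype A] (P : S → A → S → ℝ) (π : S → A → ℝ) : Matrix S S ℝ :=
  .of fun s s' => ∑ a, π s a * P s a s'

lemma transitionMatrix_sub [Fintype A] (P : S → A → S → ℝ) (x y : S → A → ℝ) :
    transitionMatrix P (x - y) = transitionMatrix P x - transitionMatrix P y := by
  ext s s'
  simp [transitionMatrix, sub_mul]

variable [Fintype S] [Fintype A]

lemma transitionMatrix_mulVec (P : S → A → S → ℝ) (x : S → A → ℝ) (f : S → ℝ) :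
    transitionMatrix P x *ᵥ f = actionSum x (nextStateMean P f) := by
  ext s
  simp only [transitionMatrix, actionSum, nextStateMean, mulVec, dotProduct, of_apply, sum_mul,
    mul_sum, mul_assoc]
  exact sum_comm

lemma markovStep_eq_vecMul (P : S → A → S → ℝ) (π : S → A → ℝ) (d : S → ℝ) :
    markovStep P π d = d ᵥ* transitionMatrix P π := by
  ext s'
  simp only [markovStep, transitionMatrix, vecMul, dotProduct, of_apply, mul_sum]
  exact sum_congr rfl fun _ _ => sum_congr rfl fun _ _ => by ring

lemma iterate_markovStep [DecidableEq S] (P : S → A → S → ℝ) (π : S → A → ℝ) (d : S → ℝ) (t : ℕ) :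
    (markovStep P π)^[t] d = d ᵥ* transitionMatrix P π ^ t := by
  induction t with
  | zero => simp
  | succ t ih =>
    rw [Function.iterate_succ_apply', ih, markovStep_eq_vecMul, vecMul_vecMul, pow_succ]

lemma norm_nextStateMean_le {P : S → A → S → ℝ} (hP : ∀ s a, normL1 (P s a) ≤ 1) (f : S → ℝ) :
    ‖nextStateMean P f‖ ≤ ‖f‖ :=
  norm_le_of_forall_abs_le (norm_nonneg f) fun s a =>
    (abs_dotProduct_le_normL1_mul_norm _ _).trans
      (mul_le_of_le_one_left (norm_nonneg f) (hP s a))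

lemma norm_transitionMatrix_le [Nonempty S] {P : S → A → S → ℝ} (hP : ∀ s a, normL1 (P s a) ≤ 1)
    (x : S → A → ℝ) : ‖transitionMatrix P x‖ ≤ normInfOne x := by
  rw [linfty_opNorm_eq_opNorm]
  refine ContinuousLinearMap.opNorm_le_bound _ (normInfOne_nonneg x) fun f => ?_
  calc ‖transitionMatrix P x *ᵥ f‖ = ‖actionSum x (nextStateMean P f)‖ := by
        rw [transitionMatrix_mulVec]
    _ ≤ normInfOne x * ‖nextStateMean P f‖ := norm_actionSum_le _ _
    _ ≤ normInfOne x * ‖f‖ :=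
      mul_le_mul_of_nonneg_left (norm_nextStateMean_le hP f) (normInfOne_nonneg x)

lemma norm_smul_transitionMatrix_le_abs [Nonempty S] {P : S → A → S → ℝ}
    (hP : ∀ s a, normL1 (P s a) ≤ 1) {π : S → A → ℝ} (hπ : normInfOne π ≤ 1) (γ : ℝ) :
    ‖γ • transitionMatrix P π‖ ≤ |γ| := by
  rw [norm_smul, Real.norm_eq_abs]
  exact mul_le_of_le_one_right (abs_nonneg γ) ((norm_transitionMatrix_le hP π).trans hπ)

end Transition

section Resolvent

variable {S A : Type*} [Fintype S] [Fintype A] [DecidableEq S]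
  {P : S → A → S → ℝ} {γ : ℝ} {π π' : S → A → ℝ}

/-- The resolvent `G_π = (1 - γ T_π)⁻¹ = ∑ₜ γᵗ T_πᵗ` of the transition matrix, also called the
successor representation: its entry at `(s,s')` is the expected discounted number of visits to `s'`
from `s`. -/
def resolventMatrix (P : S → A → S → ℝ) (γ : ℝ) (π : S → A → ℝ) : Matrix S S ℝ :=
  (1 - γ • transitionMatrix P π)⁻¹

lemma hasSum_resolventMatrix (hT : ‖γ • transitionMatrix P π‖ < 1) :
    HasSum (fun t : ℕ => (γ • transitionMatrix P π) ^ t) (resolventMatrix P γ π) := by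
  rw [resolventMatrix, nonsing_inv_eq_ringInverse]
  exact hasSum_geom_series_inverse _ hT

lemma hasSum_dotProduct_iterate_markovStep (hT : ‖γ • transitionMatrix P π‖ < 1) (μ f : S → ℝ) :
    HasSum (fun t : ℕ => γ ^ t * ((markovStep P π)^[t] μ ⬝ᵥ f))
      (μ ⬝ᵥ resolventMatrix P γ π *ᵥ f) := by
  let φ : Matrix S S ℝ →+ ℝ := AddMonoidHom.mk' (fun M => μ ⬝ᵥ M *ᵥ f) fun M N => by
    rw [add_mulVec, dotProduct_add]
  have hφ : Continuous φ := by
    change Continuous fun M : Matrix S S ℝ => μ ⬝ᵥ M *ᵥ f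
    fun_prop
  have hterm (t : ℕ) : φ ((γ • transitionMatrix P π) ^ t) =
      γ ^ t * ((markovStep P π)^[t] μ ⬝ᵥ f) := by
    simp only [φ, AddMonoidHom.mk'_apply, smul_pow, smul_mulVec, dotProduct_smul, smul_eq_mul,
      iterate_markovStep, ← dotProduct_mulVec]
  exact ((hasSum_resolventMatrix hT).map φ hφ).congr_fun fun t => (hterm t).symm

lemma norm_resolventMatrix_le [Nonempty S] {c : ℝ} (hT : ‖γ • transitionMatrix P π‖ ≤ c)
    (hc : c < 1) : ‖resolventMatrix P γ π‖ ≤ (1 - c)⁻¹ := by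
  have hT_lt : ‖γ • transitionMatrix P π‖ < 1 := hT.trans_lt hc
  have hgeom := tsum_geometric_le_of_norm_lt_one _ hT_lt
  rw [geom_series_eq_inverse _ hT_lt, ← nonsing_inv_eq_ringInverse, norm_one, sub_self,
    zero_add] at hgeom
  exact hgeom.trans (inv_anti₀ (sub_pos.2 hc) (sub_le_sub_left hT 1))

lemma resolventMatrix_sub (hT : ‖γ • transitionMatrix P π‖ < 1)
    (hT' : ‖γ • transitionMatrix P π'‖ < 1) :
    resolventMatrix P γ π' - resolventMatrix P γ π =
      resolventMatrix P γ π' * (γ • transitionMatrix P (π' - π)) * resolventMatrix P γ π := by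
  have hunit : IsUnit (1 - γ • transitionMatrix P π') ↔ IsUnit (1 - γ • transitionMatrix P π) :=
    iff_of_true (isUnit_one_sub_of_norm_lt_one hT') (isUnit_one_sub_of_norm_lt_one hT)
  rw [resolventMatrix, resolventMatrix, Matrix.inv_sub_inv hunit, sub_sub_sub_cancel_left,
    ← smul_sub, transitionMatrix_sub]

lemma norm_resolventMatrix_sub_le [Nonempty S] (hP : ∀ s a, normL1 (P s a) ≤ 1)
    (hπ : normInfOne π ≤ 1) (hπ' : normInfOne π' ≤ 1) (hγ : |γ| < 1) :
    ‖resolventMatrix P γ π' - resolventMatrix P γ π‖ ≤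
      |γ| / (1 - |γ|) ^ 2 * normInfOne (π' - π) := by
  have hT := norm_smul_transitionMatrix_le_abs hP hπ γ
  have hT' := norm_smul_transitionMatrix_le_abs hP hπ' γ
  have hδ : ‖γ • transitionMatrix P (π' - π)‖ ≤ |γ| * normInfOne (π' - π) := by
    rw [norm_smul, Real.norm_eq_abs]
    exact mul_le_mul_of_nonneg_left (norm_transitionMatrix_le hP _) (abs_nonneg γ)
  have hc : 0 ≤ (1 - |γ|)⁻¹ := inv_nonneg.2 (sub_nonneg.2 hγ.le)
  have hN : 0 ≤ |γ| * normInfOne (π' - π) := mul_nonneg (abs_nonneg γ) (normInfOne_nonneg _)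
  rw [resolventMatrix_sub (hT.trans_lt hγ) (hT'.trans_lt hγ)]
  calc _ ≤ ‖resolventMatrix P γ π'‖ * ‖γ • transitionMatrix P (π' - π)‖ *
        ‖resolventMatrix P γ π‖ := norm_mul₃_le
    _ ≤ (1 - |γ|)⁻¹ * (|γ| * normInfOne (π' - π)) * (1 - |γ|)⁻¹ :=
      mul_le_mul (mul_le_mul (norm_resolventMatrix_le hT' hγ) hδ (norm_nonneg _) hc)
        (norm_resolventMatrix_le hT hγ) (norm_nonneg _) (mul_nonneg hc hN)
    _ = |γ| / (1 - |γ|) ^ 2 * normInfOne (π' - π) := by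
      rw [div_eq_mul_inv, ← inv_pow]
      ring

end Resolvent

section Value

variable {S A : Type*} [Fintype S] [Fintype A] [DecidableEq S]
  {P : S → A → S → ℝ} {γ : ℝ} {π π' : S → A → ℝ}

lemma valueV_eq_dotProduct (hT : ‖γ • transitionMatrix P π‖ < 1) (r : S → A → ℝ) (μ : S → ℝ) :
    valueV P r γ π μ = μ ⬝ᵥ resolventMatrix P γ π *ᵥ actionSum π r :=
  (hasSum_dotProduct_iterate_markovStep hT μ _).tsum_eq

lemma visitDist_eq_smul_vecMul (hT : ‖γ • transitionMatrix P π‖ < 1) (μ : S → ℝ) :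
    visitDist P γ π μ = (1 - γ) • μ ᵥ* resolventMatrix P γ π := by
  ext s
  have h := (hasSum_dotProduct_iterate_markovStep hT μ (Pi.single s 1)).tsum_eq
  simp only [dotProduct_mulVec, dotProduct_single_one] at h
  rw [visitDist, h, Pi.smul_apply, smul_eq_mul]

lemma valueQ_eq_add_smul (hT : ‖γ • transitionMatrix P π‖ < 1) (r : S → A → ℝ) :
    valueQ P r γ π =
      r + γ • nextStateMean P (resolventMatrix P γ π *ᵥ actionSum π r) := by
  have hdirac (s : S) : valueV P r γ π (fun s' => if s' = s then 1 else 0) =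
      (resolventMatrix P γ π *ᵥ actionSum π r) s := by
    rw [valueV_eq_dotProduct hT]
    simp [dotProduct]
  ext s a
  simp only [valueQ, hdirac, Pi.add_apply, Pi.smul_apply, smul_eq_mul, nextStateMean, dotProduct]

lemma norm_valueQ_le [Nonempty S] (hP : ∀ s a, normL1 (P s a) ≤ 1) (hπ : normInfOne π ≤ 1)
    (hγ : |γ| < 1) (r : S → A → ℝ) : ‖valueQ P r γ π‖ ≤ ‖r‖ / (1 - |γ|) := by
  have hT := norm_smul_transitionMatrix_le_abs hP hπ γ
  have hpos : 0 < 1 - |γ| := sub_pos.2 hγ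
  have hr : ‖actionSum π r‖ ≤ ‖r‖ :=
    (norm_actionSum_le π r).trans (mul_le_of_le_one_left (norm_nonneg r) hπ)
  have hV : ‖resolventMatrix P γ π *ᵥ actionSum π r‖ ≤ (1 - |γ|)⁻¹ * ‖r‖ :=
    (linfty_opNorm_mulVec _ _).trans <|
      mul_le_mul (norm_resolventMatrix_le hT hγ) hr (norm_nonneg _) (inv_nonneg.2 hpos.le)
  rw [valueQ_eq_add_smul (hT.trans_lt hγ)]
  calc _ ≤ ‖r‖ + |γ| * ‖nextStateMean P (resolventMatrix P γ π *ᵥ actionSum π r)‖ := by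
        refine (norm_add_le _ _).trans_eq ?_
        rw [norm_smul, Real.norm_eq_abs]
    _ ≤ ‖r‖ + |γ| * ((1 - |γ|)⁻¹ * ‖r‖) := by
        gcongr
        exact (norm_nextStateMean_le hP _).trans hV
    _ = ‖r‖ / (1 - |γ|) := by
        field_simp
        ring

lemma performance_difference (hT : ‖γ • transitionMatrix P π‖ < 1)
    (hT' : ‖γ • transitionMatrix P π'‖ < 1) (r : S → A → ℝ) (μ : S → ℝ) :
    valueV P r γ π' μ - valueV P r γ π μ =
      μ ⬝ᵥ resolventMatrix P γ π' *ᵥ actionSum (π' - π) (valueQ P r γ π) := by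
  set G := resolventMatrix P γ π with hG
  set G' := resolventMatrix P γ π' with hG'
  have hsplit : G' *ᵥ actionSum π' r - G *ᵥ actionSum π r =
      G' *ᵥ actionSum (π' - π) r + (G' - G) *ᵥ actionSum π r := by
    rw [actionSum_sub_left, mulVec_sub, sub_mulVec, sub_add_sub_cancel]
  have hres : (G' - G) *ᵥ actionSum π r =
      G' *ᵥ γ • actionSum (π' - π) (nextStateMean P (G *ᵥ actionSum π r)) := by
    rw [hG, hG', resolventMatrix_sub hT hT', ← mulVec_mulVec, ← mulVec_mulVec, smul_mulVec,
      transitionMatrix_mulVec]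
  rw [valueV_eq_dotProduct hT, valueV_eq_dotProduct hT', ← dotProduct_sub, hsplit, hres,
    ← mulVec_add, ← actionSum_smul_right, ← actionSum_add_right, valueQ_eq_add_smul hT]

lemma dotSA_gradV (hT : ‖γ • transitionMatrix P π‖ < 1) (hγ : γ ≠ 1) (r x : S → A → ℝ)
    (μ : S → ℝ) :
    dotSA (gradV P r γ π μ) x =
      μ ⬝ᵥ resolventMatrix P γ π *ᵥ actionSum x (valueQ P r γ π) := by
  have h1γ : 1 - γ ≠ 0 := sub_ne_zero.2 hγ.symm
  simp only [dotSA, gradV, visitDist_eq_smul_vecMul hT, Pi.smul_apply, smul_eq_mul, one_div,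
    inv_mul_cancel_left₀ h1γ, dotProduct_mulVec]
  simp only [dotProduct, actionSum, mul_sum]
  exact sum_congr rfl fun _ _ => sum_congr rfl fun _ _ => by ring

end Value

theorem value_function_smooth_general {S A : Type*} [Fintype S] [Fintype A] [Nonempty S]
    [DecidableEq S] (P : S → A → S → ℝ) (r : S → A → ℝ) (γ : ℝ) (μ : S → ℝ)
    (hP : ∀ s a, normL1 (P s a) ≤ 1) (hγ : |γ| < 1) (π π' : S → A → ℝ)
    (hπ : normInfOne π ≤ 1) (hπ' : normInfOne π' ≤ 1) :
    |valueV P r γ π' μ - valueV P r γ π μ - dotSA (gradV P r γ π μ) (π' - π)| ≤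
      |γ| * normL1 μ * ‖r‖ / (1 - |γ|) ^ 3 * normInfOne (π' - π) ^ 2 := by
  have hT := (norm_smul_transitionMatrix_le_abs hP hπ γ).trans_lt hγ
  have hT' := (norm_smul_transitionMatrix_le_abs hP hπ' γ).trans_lt hγ
  have hpos : 0 < 1 - |γ| := sub_pos.2 hγ
  set N := normInfOne (π' - π)
  set g := actionSum (π' - π) (valueQ P r γ π)
  have hN : 0 ≤ N := normInfOne_nonneg _
  have hμ : 0 ≤ normL1 μ := normL1_nonneg μ
  have hg : ‖g‖ ≤ N * (‖r‖ / (1 - |γ|)) :=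
    (norm_actionSum_le _ _).trans (mul_le_mul_of_nonneg_left (norm_valueQ_le hP hπ hγ r) hN)
  rw [performance_difference hT hT', dotSA_gradV hT (lt_of_abs_lt hγ).ne,
    ← dotProduct_sub, ← sub_mulVec]
  calc _ ≤ normL1 μ * ‖(resolventMatrix P γ π' - resolventMatrix P γ π) *ᵥ g‖ :=
        abs_dotProduct_le_normL1_mul_norm _ _
    _ ≤ normL1 μ * (‖resolventMatrix P γ π' - resolventMatrix P γ π‖ * ‖g‖) := by
        gcongr
        exact linfty_opNorm_mulVec _ _
    _ ≤ normL1 μ * (|γ| / (1 - |γ|) ^ 2 * N * (N * (‖r‖ / (1 - |γ|)))) := by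
        gcongr
        exact norm_resolventMatrix_sub_le hP hπ hπ' hγ
    _ = |γ| * normL1 μ * ‖r‖ / (1 - |γ|) ^ 3 * N ^ 2 := by
        field_simp

/-- **Smoothness of the value function (Lemma 5, `lem:smoothness`).**
For any two policies `π` and `π'`,
`|V^{π'} − V^π − (∇_π V^π)ᵀ(π' − π)| ≤ (γ/(1−γ)³)·∥π' − π∥_{∞,1}²`,
i.e. the value function is `2γ/(1−γ)³`-smooth in the `∥·∥_{∞,1}` norm. -/
theorem value_function_smooth {S A : Type*} [Fintype S] [Fintype A] [Nonempty S] [Nonempty A]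
    [DecidableEq S] (P : S → A → S → ℝ) (r : S → A → ℝ) (γ : ℝ) (d₀ : S → ℝ)
    (hP : IsKernel P) (hr : ∀ s a, r s a ∈ Set.Icc (0 : ℝ) 1)
    (hγ : γ ∈ Set.Ico (0 : ℝ) 1) (hd₀ : IsDist d₀)
    (π π' : S → A → ℝ) (hπ : IsPolicy π) (hπ' : IsPolicy π') :
    |valueV P r γ π' d₀ - valueV P r γ π d₀ -
        dotSA (gradV P r γ π d₀) (fun s a => π' s a - π s a)| ≤
      γ / (1 - γ) ^ 3 * (normInfOne (fun s a => π' s a - π s a)) ^ 2 := by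
  have hr1 : ‖r‖ ≤ 1 := norm_le_of_forall_abs_le zero_le_one fun s a =>
    abs_le.2 ⟨neg_one_lt_zero.le.trans (hr s a).1, (hr s a).2⟩
  have hsmooth := value_function_smooth_general P r γ d₀ (fun s a => (hP.normL1_eq_one s a).le)
    ((abs_of_nonneg hγ.1).trans_lt hγ.2) π π' hπ.normInfOne_eq_one.le hπ'.normInfOne_eq_one.le
  rw [abs_of_nonneg hγ.1, hd₀.normL1_eq_one, mul_one] at hsmooth
  exact hsmooth.trans (mul_le_mul_of_nonneg_right (div_le_div_of_nonneg_right
    (mul_le_of_le_one_right hγ.1 hr1) (pow_nonneg (sub_nonneg.2 hγ.2.le) 3)) (sq_nonneg _))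
end
end

section
/- The extended value function Ṽ_μ is differentiable at every policy π, and its partial derivative with respect to the coordinate W(s,a), evaluated at W = π, equals (1/(1−γ))·d^π_μ(s)·Q^π(s,a) for every s ∈ S and a ∈ A (the policy gradient theorem in tabular form). -/
open Finset

noncomputable section

open Matrix in
/-- The extended value function `Ṽ_μ(W) = μᵀ(I − γ P_W)⁻¹ r_W`, where
`P_W(s,s') = ∑_a W(s,a)·P(s'|s,a)` and `r_W(s) = ∑_a W(s,a)·r(s,a)`. -/
def tildeV {S A : Type*} [Fintype S] [Fintype A] [DecidableEq S] (P : S → A → S → ℝ)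
    (r : S → A → ℝ) (γ : ℝ) (μ : S → ℝ) (W : S → A → ℝ) : ℝ :=
  μ ⬝ᵥ (((1 : Matrix S S ℝ) - γ • Matrix.of fun s s' => ∑ a, W s a * P s a s')⁻¹ *ᵥ
    fun s => ∑ a, W s a * r s a)

/-!
Let `V_W = (I − γ P_W)⁻¹ r_W`, and let `q_W(s,a) = r(s,a) + γ ∑_{s'} P(s'|s,a) V_W(s')` be its
one-step lookahead. The Bellman equation `V_W(s) = ∑_a W(s,a) q_W(s,a)` turns the resolvent
identity into the performance difference formula

  `Ṽ_μ(W') − Ṽ_μ(W) = ∑_{s,a} (μᵀ (I − γ P_{W'})⁻¹)(s) · q_W(s,a) · (W'(s,a) − W(s,a))`.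

Its coefficients depend continuously on `W'`, so the derivative at `W` is read off by setting
`W' = W` in them (Carathéodory's form of differentiability). Where the Neumann series of
`(I − γ P_W)⁻¹` converges, it identifies `(1 − γ) μᵀ (I − γ P_W)⁻¹` with the visitation
distribution, and `V_W`, hence `q_W`, with the value functions.
-/

section PolicyGradient

open Filter Matrix
open scoped Topology

/-- Carathéodory's criterion for differentiability. -/
lemma hasFDerivAt_of_sub_eq_apply_sub {𝕜 E F : Type*} [NontriviallyNormedField 𝕜]
    [NormedAddCommGroup E] [NormedSpace 𝕜 E] [NormedAddCommGroup F] [NormedSpace 𝕜 F]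
    {f : E → F} {φ : E → E →L[𝕜] F} {x : E} (hφ : ContinuousAt φ x)
    (hf : ∀ᶠ y in 𝓝 x, f y - f x = φ y (y - x)) : HasFDerivAt f (φ x) x := by
  rw [hasFDerivAt_iff_isLittleO, Asymptotics.isLittleO_iff]
  intro ε hε
  filter_upwards [hf, Metric.continuousAt_iff'.mp hφ ε hε] with y hy hφy
  rw [hy, ← _root_.sub_apply]
  exact (φ y - φ x).le_of_opNorm_le (dist_eq_norm (φ y) (φ x) ▸ hφy.le) (y - x)

lemma continuousAt_matrix_inv_of_isUnit {n 𝕜 : Type*} [Fintype n] [DecidableEq n] [Field 𝕜]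
    [TopologicalSpace 𝕜] [IsTopologicalDivisionRing 𝕜] {M : Matrix n n 𝕜} (hM : IsUnit M) :
    ContinuousAt Inv.inv M := by
  refine continuousAt_matrix_inv M ?_
  rw [Ring.inverse_eq_inv']
  exact continuousAt_inv₀ ((isUnit_iff_isUnit_det M).mp hM).ne_zero

lemma hasSum_pow_inv_one_sub {n R : Type*} [Fintype n] [DecidableEq n] [CommRing R]
    [TopologicalSpace R] [IsTopologicalRing R] [T2Space R] {M : Matrix n n R}
    (hM : Summable fun t : ℕ => M ^ t) : HasSum (fun t : ℕ => M ^ t) (1 - M)⁻¹ := by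
  rw [inv_eq_left_inv hM.tsum_pow_mul_one_sub]
  exact hM.hasSum

lemma summable_pow_smul_of_mem_rowStochastic {n : Type*} [Fintype n] [DecidableEq n]
    {M : Matrix n n ℝ} (hM : M ∈ rowStochastic ℝ n) {γ : ℝ} (hγ : |γ| < 1) :
    Summable fun t : ℕ => (γ • M) ^ t := by
  refine Pi.summable.mpr fun i => Pi.summable.mpr fun j => ?_
  refine .of_norm_bounded (summable_geometric_of_lt_one (abs_nonneg γ) hγ) fun t => ?_
  have hMt : M ^ t ∈ rowStochastic ℝ n := pow_mem hM t
  rw [smul_pow, Matrix.smul_apply, smul_eq_mul, norm_mul, norm_pow, Real.norm_eq_abs,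
    Real.norm_of_nonneg (nonneg_of_mem_rowStochastic hMt)]
  exact mul_le_of_le_one_right (by positivity) (le_one_of_mem_rowStochastic hMt)

variable {S A : Type*} [Fintype A]

/-- The matrix `P_W` of `Ṽ_μ`, for arbitrary weights `W`. It is the state transition matrix when
`W` is a policy. -/
def policyMatrix (P : S → A → S → ℝ) (W : S → A → ℝ) : Matrix S S ℝ :=
  Matrix.of fun s s' => ∑ a, W s a * P s a s'

/-- The vector `r_W` of `Ṽ_μ`, for arbitrary weights `W`. It is the expected one-step reward when
`W` is a policy. -/
def policyReward (r : S → A → ℝ) (W : S → A → ℝ) : S → ℝ :=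
  fun s => ∑ a, W s a * r s a

lemma continuous_policyMatrix (P : S → A → S → ℝ) : Continuous (policyMatrix P) := by
  unfold policyMatrix
  fun_prop

variable [Fintype S]

/-- The pairing `dotSA x` with a fixed `x`, as a continuous linear functional on `ℝ^{S×A}`: the
Fréchet derivative with gradient `x`. -/
def dotSACLM (x : S → A → ℝ) : (S → A → ℝ) →L[ℝ] ℝ :=
  ∑ s, ∑ a, x s a •
    ((ContinuousLinearMap.proj a : (A → ℝ) →L[ℝ] ℝ) ∘L ContinuousLinearMap.proj s)

lemma dotSACLM_apply (x y : S → A → ℝ) : dotSACLM x y = dotSA x y := by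
  simp [dotSACLM, dotSA]

lemma continuous_dotSACLM : Continuous (dotSACLM : (S → A → ℝ) → (S → A → ℝ) →L[ℝ] ℝ) := by
  unfold dotSACLM
  fun_prop

lemma dotSA_single [DecidableEq S] [DecidableEq A] (x : S → A → ℝ) (s : S) (a : A) :
    dotSA x (Pi.single s (Pi.single a 1)) = x s a := by
  simp [dotSA, Pi.single_apply, ite_apply]

/-- The one-step lookahead `r(s,a) + γ ∑_{s'} P(s'|s,a) V(s')` at a state-value vector `V`. It is
`Q^π` when `V` is the value vector of `π`. -/
def lookahead (P : S → A → S → ℝ) (r : S → A → ℝ) (γ : ℝ) (V : S → ℝ) : S → A → ℝ :=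
  fun s a => r s a + γ * (P s a ⬝ᵥ V)

/-- The Bellman operator `V ↦ r_W + γ P_W V`, whose fixed point is the value vector of `W`. -/
def bellmanOp (P : S → A → S → ℝ) (r : S → A → ℝ) (γ : ℝ) (W : S → A → ℝ) (V : S → ℝ) : S → ℝ :=
  policyReward r W + γ • (policyMatrix P W *ᵥ V)

lemma bellmanOp_apply (P : S → A → S → ℝ) (r : S → A → ℝ) (γ : ℝ) (W : S → A → ℝ) (V : S → ℝ)
    (s : S) : bellmanOp P r γ W V s = ∑ a, W s a * lookahead P r γ V s a := by
  have hP : (policyMatrix P W *ᵥ V) s = ∑ a, W s a * (P s a ⬝ᵥ V) := by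
    simp only [policyMatrix, mulVec, dotProduct, of_apply, sum_mul, mul_sum, mul_assoc]
    exact sum_comm
  simp only [bellmanOp, policyReward, lookahead, Pi.add_apply, Pi.smul_apply, smul_eq_mul, hP,
    mul_add, sum_add_distrib, mul_sum, mul_left_comm]

lemma dotProduct_bellmanOp_sub (P : S → A → S → ℝ) (r : S → A → ℝ) (γ : ℝ) (W W' : S → A → ℝ)
    (ν V : S → ℝ) :
    ν ⬝ᵥ (bellmanOp P r γ W' V - bellmanOp P r γ W V) =
      dotSA (fun s a => ν s * lookahead P r γ V s a) (W' - W) := by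
  simp only [dotProduct, dotSA, Pi.sub_apply, bellmanOp_apply, ← sum_sub_distrib, mul_sum]
  exact sum_congr rfl fun s _ => sum_congr rfl fun a _ => by ring

variable [DecidableEq S]

lemma policyMatrix_mem_rowStochastic {P : S → A → S → ℝ} {π : S → A → ℝ}
    (hP : IsKernel P) (hπ : IsPolicy π) : policyMatrix P π ∈ rowStochastic ℝ S := by
  refine mem_rowStochastic_iff_sum.mpr ⟨fun s s' => ?_, fun s => ?_⟩
  · exact sum_nonneg fun a _ => mul_nonneg (hπ.1 s a) (hP.1 s a s')
  · calc ∑ s', ∑ a, π s a * P s a s' = ∑ a, π s a * ∑ s', P s a s' := by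
          simp only [mul_sum]
          exact sum_comm
      _ = 1 := by simp only [hP.2, mul_one, hπ.2]

/-- The resolvent `(I − γ P_W)⁻¹`, which is the zero matrix when `I − γ P_W` is singular. -/
def policyResolvent (P : S → A → S → ℝ) (γ : ℝ) (W : S → A → ℝ) : Matrix S S ℝ :=
  (1 - γ • policyMatrix P W)⁻¹

/-- The value vector `V_W = (I − γ P_W)⁻¹ r_W`, whose pairing with `μ` is `Ṽ_μ(W)`. -/
def policyValue (P : S → A → S → ℝ) (r : S → A → ℝ) (γ : ℝ) (W : S → A → ℝ) : S → ℝ :=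
  policyResolvent P γ W *ᵥ policyReward r W

lemma tildeV_eq_dotProduct_policyValue (P : S → A → S → ℝ) (r : S → A → ℝ) (γ : ℝ) (μ : S → ℝ)
    (W : S → A → ℝ) : tildeV P r γ μ W = μ ⬝ᵥ policyValue P r γ W :=
  rfl

section Resolvent

variable {P : S → A → S → ℝ} {γ : ℝ} {W W' : S → A → ℝ}

lemma continuousAt_policyResolvent (hW : IsUnit (1 - γ • policyMatrix P W)) :
    ContinuousAt (policyResolvent P γ) W :=
  ContinuousAt.comp (f := fun W => 1 - γ • policyMatrix P W) (continuousAt_matrix_inv_of_isUnit hW)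
    (continuous_const.sub ((continuous_policyMatrix P).const_smul γ)).continuousAt

lemma eventually_isUnit_one_sub_smul_policyMatrix (hW : IsUnit (1 - γ • policyMatrix P W)) :
    ∀ᶠ W' in 𝓝 W, IsUnit (1 - γ • policyMatrix P W') := by
  simp only [isUnit_iff_isUnit_det, isUnit_iff_ne_zero] at hW ⊢
  have hdet : Continuous fun W' => (1 - γ • policyMatrix P W').det :=
    (continuous_const.sub ((continuous_policyMatrix P).const_smul γ)).matrix_det
  exact hdet.continuousAt.eventually_ne hW

lemma bellmanOp_policyValue (hW : IsUnit (1 - γ • policyMatrix P W)) (r : S → A → ℝ) :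
    bellmanOp P r γ W (policyValue P r γ W) = policyValue P r γ W := by
  have hG : (1 - γ • policyMatrix P W) *ᵥ policyValue P r γ W = policyReward r W := by
    rw [policyValue, policyResolvent, mulVec_mulVec,
      mul_nonsing_inv _ ((isUnit_iff_isUnit_det _).mp hW), one_mulVec]
  rw [bellmanOp, ← hG, sub_mulVec, one_mulVec, smul_mulVec, sub_add_cancel]

lemma policyValue_sub (hW : IsUnit (1 - γ • policyMatrix P W)) (r : S → A → ℝ) (V : S → ℝ) :
    policyValue P r γ W - V = policyResolvent P γ W *ᵥ (bellmanOp P r γ W V - V) := by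
  have hV : policyResolvent P γ W *ᵥ ((1 - γ • policyMatrix P W) *ᵥ V) = V := by
    rw [policyResolvent, mulVec_mulVec, nonsing_inv_mul _ ((isUnit_iff_isUnit_det _).mp hW),
      one_mulVec]
  have hB : bellmanOp P r γ W V - V = policyReward r W - (1 - γ • policyMatrix P W) *ᵥ V := by
    rw [bellmanOp, sub_mulVec, one_mulVec, smul_mulVec]
    abel
  rw [hB, mulVec_sub, hV, policyValue]

/-- The performance difference lemma of Kakade and Langford. -/
lemma tildeV_sub_tildeV (hW : IsUnit (1 - γ • policyMatrix P W))
    (hW' : IsUnit (1 - γ • policyMatrix P W')) (r : S → A → ℝ) (μ : S → ℝ) :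
    tildeV P r γ μ W' - tildeV P r γ μ W =
      dotSA (fun s a => (μ ᵥ* policyResolvent P γ W') s *
        lookahead P r γ (policyValue P r γ W) s a) (W' - W) := by
  rw [← dotProduct_bellmanOp_sub, bellmanOp_policyValue hW, ← dotProduct_mulVec,
    ← policyValue_sub hW', dotProduct_sub]
  simp only [tildeV_eq_dotProduct_policyValue]

lemma hasFDerivAt_tildeV (hW : IsUnit (1 - γ • policyMatrix P W)) (r : S → A → ℝ) (μ : S → ℝ) :
    HasFDerivAt (tildeV P r γ μ)
      (dotSACLM fun s a => (μ ᵥ* policyResolvent P γ W) s *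
        lookahead P r γ (policyValue P r γ W) s a) W := by
  let φ (W' : S → A → ℝ) : (S → A → ℝ) →L[ℝ] ℝ :=
    dotSACLM fun s a => (μ ᵥ* policyResolvent P γ W') s *
      lookahead P r γ (policyValue P r γ W) s a
  have hφ : ContinuousAt φ W := by
    have hcoeff : Continuous fun (N : Matrix S S ℝ) s a =>
        (μ ᵥ* N) s * lookahead P r γ (policyValue P r γ W) s a := by
      fun_prop
    exact (continuous_dotSACLM.comp hcoeff).continuousAt.comp (continuousAt_policyResolvent hW)
  refine hasFDerivAt_of_sub_eq_apply_sub (φ := φ) hφ ?_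
  filter_upwards [eventually_isUnit_one_sub_smul_policyMatrix hW] with W' hW'
  rw [tildeV_sub_tildeV hW hW', dotSACLM_apply]

end Resolvent

section NeumannSeries

variable {P : S → A → S → ℝ} {γ : ℝ} {W : S → A → ℝ}

lemma markovStep_iterate (P : S → A → S → ℝ) (W : S → A → ℝ) (ν : S → ℝ) (t : ℕ) :
    (markovStep P W)^[t] ν = ν ᵥ* policyMatrix P W ^ t := by
  have hstep (d : S → ℝ) : markovStep P W d = d ᵥ* policyMatrix P W := by
    ext s'
    simp only [markovStep, policyMatrix, vecMul, dotProduct, of_apply, mul_sum]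
    exact sum_congr rfl fun s _ => sum_congr rfl fun a _ => by ring
  induction t with
  | zero => simp
  | succ t ih => rw [Function.iterate_succ_apply', ih, hstep, vecMul_vecMul, pow_succ]

lemma hasSum_smul_markovStep_iterate (hW : Summable fun t : ℕ => (γ • policyMatrix P W) ^ t)
    (ν : S → ℝ) :
    HasSum (fun t : ℕ => γ ^ t • (markovStep P W)^[t] ν) (ν ᵥ* policyResolvent P γ W) := by
  have h := (hasSum_pow_inv_one_sub hW).mapL (vecMulBilin ℝ ℝ ν).toContinuousLinearMap
  simp only [LinearMap.coe_toContinuousLinearMap', vecMulBilin_apply, smul_pow, vecMul_smul,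
    ← markovStep_iterate] at h
  exact h

lemma visitDist_eq (hW : Summable fun t : ℕ => (γ • policyMatrix P W) ^ t) (μ : S → ℝ) (s : S) :
    visitDist P γ W μ s = (1 - γ) * (μ ᵥ* policyResolvent P γ W) s :=
  congrArg ((1 - γ) * ·) (Pi.hasSum.mp (hasSum_smul_markovStep_iterate hW μ) s).tsum_eq

lemma valueV_eq (hW : Summable fun t : ℕ => (γ • policyMatrix P W) ^ t) (r : S → A → ℝ)
    (ν : S → ℝ) : valueV P r γ W ν = ν ⬝ᵥ policyValue P r γ W := by
  have h := (hasSum_smul_markovStep_iterate hW ν).mapL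
    ((dotProductBilin ℝ ℝ).flip (policyReward r W)).toContinuousLinearMap
  calc valueV P r γ W ν = ∑' t : ℕ, (γ ^ t • (markovStep P W)^[t] ν) ⬝ᵥ policyReward r W := by
        simp only [smul_dotProduct, smul_eq_mul]
        rfl
    _ = ν ᵥ* policyResolvent P γ W ⬝ᵥ policyReward r W := h.tsum_eq
    _ = ν ⬝ᵥ policyValue P r γ W := (dotProduct_mulVec ..).symm

lemma valueQ_eq (hW : Summable fun t : ℕ => (γ • policyMatrix P W) ^ t) (r : S → A → ℝ)
    (s : S) (a : A) : valueQ P r γ W s a = lookahead P r γ (policyValue P r γ W) s a := by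
  simp [valueQ, lookahead, valueV_eq hW, dotProduct]

theorem policy_gradient_theorem_general [DecidableEq A]
    (hW : Summable fun t : ℕ => (γ • policyMatrix P W) ^ t) (hγ : γ ≠ 1) (r : S → A → ℝ)
    (μ : S → ℝ) :
    DifferentiableAt ℝ (tildeV P r γ μ) W ∧
      ∀ s a, fderiv ℝ (tildeV P r γ μ) W (Pi.single s (Pi.single a 1)) =
        (1 / (1 - γ)) * visitDist P γ W μ s * valueQ P r γ W s a := by
  have hunit : IsUnit (1 - γ • policyMatrix P W) := .of_mul_eq_one _ hW.one_sub_mul_tsum_pow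
  have hderiv := hasFDerivAt_tildeV hunit r μ
  refine ⟨hderiv.differentiableAt, fun s a => ?_⟩
  rw [hderiv.fderiv, dotSACLM_apply, dotSA_single, visitDist_eq hW, valueQ_eq hW, one_div,
    inv_mul_cancel_left₀ (sub_ne_zero.mpr hγ.symm)]

end NeumannSeries

end PolicyGradient

/-- **Policy gradient theorem (tabular form).**
The extended value function `Ṽ_μ` is differentiable at every policy `π`, and its partial
derivative with respect to the coordinate `W(s,a)`, evaluated at `W = π`, equals
`(1/(1−γ))·d^π_μ(s)·Q^π(s,a)`. -/
theorem policy_gradient_theorem {S A : Type*} [Fintype S] [Fintype A] [Nonempty S]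
    [Nonempty A] [DecidableEq S] [DecidableEq A]
    (P : S → A → S → ℝ) (r : S → A → ℝ) (γ : ℝ) (d₀ : S → ℝ)
    (hP : IsKernel P) (hr : ∀ s a, r s a ∈ Set.Icc (0 : ℝ) 1)
    (hγ : γ ∈ Set.Ico (0 : ℝ) 1) (hd₀ : IsDist d₀)
    (μ : S → ℝ) (hμ : IsDist μ)
    (π : S → A → ℝ) (hπ : IsPolicy π) :
    DifferentiableAt ℝ (tildeV P r γ μ) π ∧
      ∀ s a, fderiv ℝ (tildeV P r γ μ) π (Pi.single s (Pi.single a 1)) =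
        (1 / (1 - γ)) * visitDist P γ π μ s * valueQ P r γ π s a :=
  policy_gradient_theorem_general (summable_pow_smul_of_mem_rowStochastic
    (policyMatrix_mem_rowStochastic hP hπ) (abs_lt.mpr ⟨by linarith [hγ.1], hγ.2⟩)) hγ.2.ne r μ
end
end
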